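/- arXiv:1603.01891 — 5 statements merged into one kernel-verified Lean document; each statement's English description precedes it below -/
import Mathlib

section
/- Let 1≤s≤∞, and let g(t), h(t) be 2π-periodic functions having finite derivatives and satisfying r(t) := √(g²(t)+h²(t)) ≠ 0 for all t and M := sup_{t∈ℝ} √((g'(t))²+(h'(t))²) / √(g²(t)+h²(t)) < ∞. Let φ(t) = g(t)cos(nt+γ) + h(t)sin(nt+γ) with γ∈ℝ, n∈ℕ. Then for all n ≥ 4πsM if 1≤s<∞ (and all n≥1 if s=∞), one has ‖φ‖_s = ‖r‖_s ( ‖cos t‖_s/(2π)^{1/s} + δ_n M/n ), where |δ_n| < 14π. -/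
open MeasureTheory Real Filter
open scoped ENNReal

/-- `L_s` norm over a period `[-π,π]` of a `2π`-periodic function. -/
noncomputable def periodNorm (s : ℝ≥0∞) (f : ℝ → ℝ) : ℝ :=
  (eLpNorm f s (volume.restrict (Set.Ioc (-π) π))).toReal

lemma pn_memLp (s : ℝ≥0∞) {f : ℝ → ℝ} (hf : Continuous f) :
    MemLp f s (volume.restrict (Set.Ioc (-π) π)) := by
  obtain ⟨C, hC⟩ := (isCompact_Icc (a := -π) (b := π)).exists_bound_of_continuousOn hf.continuousOn
  refine MemLp.of_bound hf.aestronglyMeasurable C ?_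
  refine (ae_restrict_iff' measurableSet_Ioc).2 (Eventually.of_forall fun x hx => ?_)
  exact hC x ⟨hx.1.le, hx.2⟩

lemma pn_eq (s : ℝ≥0∞) {f : ℝ → ℝ} (hf : Continuous f) :
    periodNorm s f = lpNorm f s (volume.restrict (Set.Ioc (-π) π)) :=
  toReal_eLpNorm hf.aestronglyMeasurable

lemma pn_nonneg (s : ℝ≥0∞) (f : ℝ → ℝ) : 0 ≤ periodNorm s f := ENNReal.toReal_nonneg

lemma pn_le (s : ℝ≥0∞) (hs : 1 ≤ s) {f g r : ℝ → ℝ} (hf : Continuous f) (hg : Continuous g)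
    (hr : Continuous r) (c : ℝ) (hc : 0 ≤ c) (h : ∀ t, |f t| ≤ |g t| + c * r t) :
    periodNorm s f ≤ periodNorm s g + c * periodNorm s r := by
  have hg' : Continuous (fun t => |g t|) := hg.abs
  have hcr : Continuous (c • r) := hr.const_smul c
  rw [pn_eq s hf, pn_eq s hg, pn_eq s hr]
  calc _ ≤ lpNorm ((fun t => |g t|) + c • r) s (volume.restrict (Set.Ioc (-π) π)) :=
        lpNorm_mono_real (pn_memLp s (hg'.add hcr)) (fun t => by simpa using h t)
    _ ≤ _ := by
      refine (lpNorm_add_le (pn_memLp s hg') hs).trans ?_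
      rw [lpNorm_const_smul, lpNorm_fun_abs hg.aestronglyMeasurable]
      simp [abs_of_nonneg hc]

lemma pn_rpow (s : ℝ≥0∞) (hs : 1 ≤ s) (hs' : s ≠ ∞) {f : ℝ → ℝ} (hf : Continuous f) :
    periodNorm s f ^ s.toReal = ∫ t in (-π)..π, |f t| ^ s.toReal := by
  have hs0 : s ≠ 0 := (zero_lt_one.trans_le hs).ne'
  have hp : s.toReal ≠ 0 := (ENNReal.toReal_pos hs0 hs').ne'
  rw [pn_eq s hf, lpNorm_eq_integral_norm_rpow_toReal hs0 hs' hf.aestronglyMeasurable,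
    intervalIntegral.integral_of_le (by linarith [pi_pos]), ← rpow_mul, inv_mul_cancel₀ hp, rpow_one]
  · rfl
  · exact integral_nonneg fun t => by positivity

lemma pn_top_le {f : ℝ → ℝ} {C : ℝ} (hC : 0 ≤ C) (h : ∀ t, |f t| ≤ C) : periodNorm ∞ f ≤ C := by
  refine ENNReal.toReal_le_of_le_ofReal hC ?_
  rw [eLpNorm_exponent_top]
  exact eLpNormEssSup_le_of_ae_bound (Eventually.of_forall h)

lemma le_pn_top {f : ℝ → ℝ} (hf : Continuous f) (hp : Function.Periodic f (2 * π)) (t : ℝ) :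
    |f t| ≤ periodNorm ∞ f := by
  obtain ⟨y, hy, hfy⟩ := hp.exists_mem_Ioc (by positivity) t (-π)
  rw [hfy]
  have h1 := ae_le_lpNorm_exponent_top (pn_memLp ∞ hf)
  rw [← pn_eq _ hf] at h1
  have h2 : (fun t => max (|f t|) (periodNorm ∞ f)) =ᵐ[volume.restrict (Set.Ioc (-π) π)]
      fun _ => periodNorm ∞ f := by
    filter_upwards [h1] with x hx
    exact max_eq_right hx
  have h3 := Measure.eqOn_Ioc_of_ae_eq volume h2
    (by fun_prop) (by fun_prop)
  have hy' : y ∈ Set.Ioc (-π) π := by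
    have e : -π + 2 * π = π := by ring
    rwa [e] at hy
  exact max_eq_right_iff.1 (h3 hy')

lemma trig_bound (a b x : ℝ) : |a * cos x + b * sin x| ≤ √(a ^ 2 + b ^ 2) := by
  apply abs_le_sqrt
  nlinarith [sq_nonneg (a * sin x - b * cos x), sin_sq_add_cos_sq x]

lemma trig_polar (a b : ℝ) : ∃ α, ∀ x, a * cos x + b * sin x = √(a ^ 2 + b ^ 2) * cos (x - α) := by
  refine ⟨Complex.arg ⟨a, b⟩, fun x => ?_⟩
  have h1 := Complex.norm_mul_cos_arg ⟨a, b⟩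
  have h2 := Complex.norm_mul_sin_arg ⟨a, b⟩
  rw [Complex.norm_eq_sqrt_sq_add_sq] at h1 h2
  simp only at h1 h2
  rw [cos_sub]
  linear_combination -cos x * h1 - sin x * h2

lemma cos_int_shift (p c : ℝ) (γ : ℝ) :
    ∫ θ in γ..(γ + 2 * π), |cos (c + θ)| ^ p = ∫ t in (-π)..π, |cos t| ^ p := by
  have hper : Function.Periodic (fun t => |cos t| ^ p) (2 * π) := fun t => by simp
  rw [intervalIntegral.integral_comp_add_left (fun t => |cos t| ^ p) c, ← add_assoc,
    hper.intervalIntegral_add_eq (c + γ) (-π)]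
  congr 1; ring

/-- the key shift estimate -/
lemma shift_bound {g h : ℝ → ℝ} {M : ℝ} (hM0 : 0 ≤ M)
    (hg : Differentiable ℝ g) (hh : Differentiable ℝ h)
    (hb : ∀ t, √(deriv g t ^ 2 + deriv h t ^ 2) ≤ M * √(g t ^ 2 + h t ^ 2))
    (t τ : ℝ) (hτ : 0 ≤ τ) (hτM : M * τ ≤ 1) :
    √((g (t + τ) - g t) ^ 2 + (h (t + τ) - h t) ^ 2) ≤ 2 * (M * τ) * √(g t ^ 2 + h t ^ 2) := by
  set z : ℝ → ℂ := fun x => (g x : ℂ) + h x * Complex.I with hz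
  have nz : ∀ a b : ℝ, ‖(a : ℂ) + b * Complex.I‖ = √(a ^ 2 + b ^ 2) := fun a b =>
    Complex.norm_add_mul_I a b
  have hd : ∀ x, HasDerivAt z (((deriv g x : ℝ) : ℂ) + ((deriv h x : ℝ) : ℂ) * Complex.I) x := fun x =>
    (hg x).hasDerivAt.ofReal_comp.add ((hh x).hasDerivAt.ofReal_comp.mul_const _)
  have key := norm_le_gronwallBound_of_norm_deriv_right_le (f := fun x => z x - z t)
    (f' := fun x => ((deriv g x : ℝ) : ℂ) + ((deriv h x : ℝ) : ℂ) * Complex.I) (δ := 0) (K := M) (ε := M * ‖z t‖)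
    (a := t) (b := t + τ)
    (fun x _ => ((hd x).sub_const _).continuousAt.continuousWithinAt)
    (fun x _ => ((hd x).sub_const _).hasDerivWithinAt) (by simp)
    (fun x _ => by
      rw [nz]
      refine (hb x).trans ?_
      rw [← nz, ← mul_add]
      gcongr
      have := norm_add_le (z x - z t) (z t)
      simpa using this) (t + τ) ⟨by linarith, le_rfl⟩
  have e1 : ‖z (t + τ) - z t‖ = √((g (t + τ) - g t) ^ 2 + (h (t + τ) - h t) ^ 2) := by
    rw [← nz]; congr 1; simp only [hz]; push_cast; ring
  have e2 : ‖z t‖ = √(g t ^ 2 + h t ^ 2) := nz _ _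
  rw [e1, e2, add_sub_cancel_left] at key
  refine key.trans ?_
  set R := √(g t ^ 2 + h t ^ 2) with hR
  have hR0 : 0 ≤ R := sqrt_nonneg _
  by_cases hM : M = 0
  · simp [hM, gronwallBound_K0]
  · rw [gronwallBound_of_K_ne_0 hM]
    have hx0 : 0 ≤ M * τ := mul_nonneg hM0 hτ
    have h3 : |exp (M * τ) - 1| ≤ 2 * |M * τ| := Real.abs_exp_sub_one_le (by rwa [abs_of_nonneg hx0])
    rw [abs_of_nonneg hx0] at h3
    have h4 := (le_abs_self _).trans h3
    have : M * R / M = R := by field_simp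
    simp only [zero_mul, zero_add, this]
    nlinarith

lemma psi_per {g h : ℝ → ℝ} (hgper : ∀ t, g (t + 2 * π) = g t) (hhper : ∀ t, h (t + 2 * π) = h t)
    (n : ℕ) (γ : ℝ) :
    Function.Periodic (fun t => g t * cos (n * t + γ) + h t * sin (n * t + γ)) (2 * π) := by
  intro t
  have e : (n : ℝ) * (t + 2 * π) + γ = (n * t + γ) + n * (2 * π) := by ring
  simp only [hgper, hhper]
  rw [e, cos_add_nat_mul_two_pi, sin_add_nat_mul_two_pi]

lemma pn_shift (s : ℝ≥0∞) (hs : 1 ≤ s) (hs' : s ≠ ∞) {f : ℝ → ℝ} (hf : Continuous f)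
    (hp : Function.Periodic f (2 * π)) (τ : ℝ) :
    periodNorm s (fun t => f (t + τ)) = periodNorm s f := by
  have hs0 : s ≠ 0 := (zero_lt_one.trans_le hs).ne'
  have hp0 : s.toReal ≠ 0 := (ENNReal.toReal_pos hs0 hs').ne'
  rw [← rpow_left_inj (pn_nonneg _ _) (pn_nonneg _ _) hp0, pn_rpow s hs hs' hf,
    pn_rpow s hs hs' (by fun_prop)]
  have hper : Function.Periodic (fun t => |f t| ^ s.toReal) (2 * π) := fun t => by
    simp only [hp t]
  rw [intervalIntegral.integral_comp_add_right (fun t => |f t| ^ s.toReal) τ]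
  have := hper.intervalIntegral_add_eq (-π + τ) (-π)
  convert! this using 2 <;> ring

lemma avg (s : ℝ≥0∞) (hs : 1 ≤ s) (hs' : s ≠ ∞) {g h : ℝ → ℝ} (hg : Continuous g)
    (hh : Continuous h) (n : ℕ) (γ : ℝ) :
    ∫ θ in γ..(γ + 2 * π), periodNorm s
      (fun t => g t * cos (n * t + θ) + h t * sin (n * t + θ)) ^ s.toReal
    = (periodNorm s (fun t => √(g t ^ 2 + h t ^ 2)) * periodNorm s cos) ^ s.toReal := by
  have hp : 0 ≤ s.toReal := ENNReal.toReal_nonneg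
  have hc : Continuous (Function.uncurry fun θ t : ℝ =>
      |g t * cos (n * t + θ) + h t * sin (n * t + θ)| ^ s.toReal) := by
    unfold Function.uncurry
    exact Continuous.rpow_const (by fun_prop) (fun _ => Or.inr hp)
  have h1 : ∀ θ, periodNorm s
      (fun t => g t * cos (n * t + θ) + h t * sin (n * t + θ)) ^ s.toReal =
      ∫ t in (-π)..π, |g t * cos (n * t + θ) + h t * sin (n * t + θ)| ^ s.toReal := fun θ =>
    pn_rpow s hs hs' (by fun_prop)
  simp_rw [h1]
  rw [intervalIntegral_intervalIntegral_swap, mul_rpow (pn_nonneg _ _) (pn_nonneg _ _),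
    pn_rpow s hs hs' (by fun_prop), pn_rpow s hs hs' continuous_cos,
    ← intervalIntegral.integral_mul_const]
  · congr 1
    ext t
    obtain ⟨α, hα⟩ := trig_polar (g t) (h t)
    simp_rw [hα, abs_mul]
    have : ∀ θ, (|√(g t ^ 2 + h t ^ 2)| * |cos (n * t + θ - α)|) ^ s.toReal =
      |√(g t ^ 2 + h t ^ 2)| ^ s.toReal * |cos ((n * t - α) + θ)| ^ s.toReal := fun θ => by
      rw [mul_rpow (abs_nonneg _) (abs_nonneg _)]
      congr 4; ring
    simp_rw [this]
    rw [intervalIntegral.integral_const_mul, cos_int_shift]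
  · refine (hc.continuousOn.integrableOn_compact
      ((isCompact_uIcc (a := γ) (b := γ + 2 * π)).prod
        (isCompact_uIcc (a := -π) (b := π)))).mono_set ?_
    exact Set.prod_mono Set.uIoc_subset_uIcc Set.uIoc_subset_uIcc

lemma main_fin (s : ℝ≥0∞) (hs : 1 ≤ s) (hs' : s ≠ ∞) {g h : ℝ → ℝ} {M : ℝ} (hM0 : 0 ≤ M)
    (hgper : ∀ t, g (t + 2 * π) = g t) (hhper : ∀ t, h (t + 2 * π) = h t)
    (hg : Differentiable ℝ g) (hh : Differentiable ℝ h)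
    (hb : ∀ t, √(deriv g t ^ 2 + deriv h t ^ 2) ≤ M * √(g t ^ 2 + h t ^ 2))
    (γ : ℝ) (n : ℕ) (hn1 : 1 ≤ n) (hn : 4 * π * s.toReal * M ≤ (n : ℝ)) :
    |periodNorm s (fun t => g t * cos (n * t + γ) + h t * sin (n * t + γ)) -
      periodNorm s (fun t => √(g t ^ 2 + h t ^ 2)) * (periodNorm s cos / (2 * π) ^ (1 / s.toReal))|
      ≤ (4 * π * M / n) * periodNorm s (fun t => √(g t ^ 2 + h t ^ 2)) := by
  have hgc := hg.continuous
  have hhc := hh.continuous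
  have hn0 : (0 : ℝ) < n := by exact_mod_cast hn1
  have hp1 : 1 ≤ s.toReal := by
    simpa using (ENNReal.toReal_le_toReal ENNReal.one_ne_top hs').2 hs
  have hp0 : 0 < s.toReal := by linarith
  have hpi := pi_pos
  have hMn : 4 * π * M ≤ n := by
    refine le_trans ?_ hn
    have : 0 ≤ π * M := by positivity
    nlinarith
  set p := s.toReal with hpdef
  set φ : ℝ → ℝ := fun t => g t * cos (n * t + γ) + h t * sin (n * t + γ) with hφ
  set r : ℝ → ℝ := fun t => √(g t ^ 2 + h t ^ 2) with hr
  set ψ : ℝ → ℝ → ℝ := fun θ t => g t * cos (n * t + θ) + h t * sin (n * t + θ) with hψ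
  have hφc : Continuous φ := by fun_prop
  have hrc : Continuous r := by fun_prop
  have hψc : ∀ θ, Continuous (ψ θ) := fun θ => by fun_prop
  have hφper : Function.Periodic φ (2 * π) := psi_per hgper hhper n γ
  set c := 4 * π * M / n with hc
  have hc0 : 0 ≤ c := by positivity
  have hdiff : ∀ θ ∈ Set.Icc γ (γ + 2 * π), ∀ t,
      |φ (t + (θ - γ) / n) - ψ θ t| ≤ c * r t := by
    intro θ hθ t
    set τ := (θ - γ) / n with hτ
    have hτ0 : 0 ≤ τ := div_nonneg (by linarith [hθ.1]) hn0.le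
    have hMτ : M * τ ≤ M * (2 * π / n) := by
      gcongr
      exact div_le_div_of_nonneg_right (by linarith [hθ.2]) hn0.le
    have hMτ2 : M * (2 * π / n) = c / 2 := by rw [hc]; ring
    have hc1 : c ≤ 1 := (div_le_one hn0).2 hMn
    have hs1 := shift_bound hM0 hg hh hb t τ hτ0 (by linarith)
    have e : (n : ℝ) * (t + τ) + γ = n * t + θ := by rw [hτ]; field_simp; ring
    have e2 : φ (t + τ) - ψ θ t =
        (g (t + τ) - g t) * cos (n * t + θ) + (h (t + τ) - h t) * sin (n * t + θ) := by
      simp only [hφ, hψ, e]; ring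
    rw [e2]
    refine (trig_bound _ _ _).trans (hs1.trans ?_)
    exact mul_le_mul_of_nonneg_right (by linarith) (sqrt_nonneg _)
  have hup : ∀ θ ∈ Set.Icc γ (γ + 2 * π),
      periodNorm s (ψ θ) ≤ periodNorm s φ + c * periodNorm s r := by
    intro θ hθ
    rw [← pn_shift s hs hs' hφc hφper ((θ - γ) / n)]
    refine pn_le s hs (hψc θ) (by fun_prop) hrc c hc0 fun t => ?_
    have h1 := hdiff θ hθ t
    have h2 := abs_sub_abs_le_abs_sub (ψ θ t) (φ (t + (θ - γ) / n))
    rw [abs_sub_comm] at h2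
    linarith
  have hlo : ∀ θ ∈ Set.Icc γ (γ + 2 * π),
      periodNorm s φ ≤ periodNorm s (ψ θ) + c * periodNorm s r := by
    intro θ hθ
    rw [← pn_shift s hs hs' hφc hφper ((θ - γ) / n)]
    refine pn_le s hs (by fun_prop) (hψc θ) hrc c hc0 fun t => ?_
    have h1 := hdiff θ hθ t
    have h2 := abs_sub_abs_le_abs_sub (φ (t + (θ - γ) / n)) (ψ θ t)
    linarith
  have havg := avg s hs hs' hgc hhc n γ
  rw [← hpdef] at havg
  have hFc : Continuous fun θ => periodNorm s (ψ θ) ^ p := by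
    have h1 : ∀ θ, periodNorm s (ψ θ) ^ p = ∫ t in (-π)..π, |ψ θ t| ^ p := fun θ =>
      pn_rpow s hs hs' (hψc θ)
    simp_rw [h1]
    apply intervalIntegral.continuous_parametric_intervalIntegral_of_continuous'
    unfold Function.uncurry
    exact Continuous.rpow_const (by fun_prop) (fun _ => Or.inr hp0.le)
  set A := periodNorm s r * (periodNorm s cos / (2 * π) ^ (1 / p)) with hA
  have hA0 : 0 ≤ A := mul_nonneg (pn_nonneg _ _) (div_nonneg (pn_nonneg _ _) (by positivity))
  have hAp : ∫ θ in γ..(γ + 2 * π), periodNorm s (ψ θ) ^ p = 2 * π * A ^ p := by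
    rw [havg, hA, ← mul_div_assoc, div_rpow (mul_nonneg (pn_nonneg _ _) (pn_nonneg _ _))
      (by positivity), ← rpow_mul (by positivity), one_div_mul_cancel hp0.ne', rpow_one, mul_div_cancel₀ _ (by positivity)]
  have hle : γ ≤ γ + 2 * π := by linarith
  have hconst : ∀ B : ℝ, ∫ _ in γ..(γ + 2 * π), B = 2 * π * B := fun B => by
    rw [intervalIntegral.integral_const]; simp
  have hr0 := pn_nonneg s r
  have hφ0 := pn_nonneg s φ
  rw [abs_le]
  constructor
  · have h1 : 2 * π * A ^ p ≤ 2 * π * (periodNorm s φ + c * periodNorm s r) ^ p := by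
      rw [← hAp, ← hconst]
      apply intervalIntegral.integral_mono_on hle (hFc.intervalIntegrable _ _) (by simp)
      intro θ hθ
      exact rpow_le_rpow (pn_nonneg _ _) (hup θ hθ) hp0.le
    have h2 := le_of_mul_le_mul_left h1 (by positivity)
    have h3 := (rpow_le_rpow_iff hA0 (by positivity) hp0).1 h2
    linarith
  · by_contra! hcon
    have hB0 : 0 ≤ periodNorm s φ - c * periodNorm s r := by linarith
    have h1 : 2 * π * (periodNorm s φ - c * periodNorm s r) ^ p ≤ 2 * π * A ^ p := by
      rw [← hAp, ← hconst]
      apply intervalIntegral.integral_mono_on hle (by simp) (hFc.intervalIntegrable _ _)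
      intro θ hθ
      exact rpow_le_rpow hB0 (by linarith [hlo θ hθ]) hp0.le
    have h2 := le_of_mul_le_mul_left h1 (by positivity)
    have h3 := (rpow_le_rpow_iff hB0 hA0 hp0).1 h2
    linarith

lemma main_top {g h : ℝ → ℝ} {M : ℝ} (hM0 : 0 ≤ M)
    (hgper : ∀ t, g (t + 2 * π) = g t) (hhper : ∀ t, h (t + 2 * π) = h t)
    (hg : Differentiable ℝ g) (hh : Differentiable ℝ h)
    (hb : ∀ t, √(deriv g t ^ 2 + deriv h t ^ 2) ≤ M * √(g t ^ 2 + h t ^ 2))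
    (γ : ℝ) (n : ℕ) (hn1 : 1 ≤ n) :
    |periodNorm ∞ (fun t => g t * cos (n * t + γ) + h t * sin (n * t + γ)) -
      periodNorm ∞ (fun t => √(g t ^ 2 + h t ^ 2)) *
        (periodNorm ∞ cos / (2 * π) ^ (1 / (∞ : ℝ≥0∞).toReal))|
      ≤ (4 * π * M / n) * periodNorm ∞ (fun t => √(g t ^ 2 + h t ^ 2)) := by
  have hgc := hg.continuous
  have hhc := hh.continuous
  have hn0 : (0 : ℝ) < n := by exact_mod_cast hn1
  have hpi := pi_pos
  have hcos : periodNorm ∞ cos = 1 := by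
    apply le_antisymm (pn_top_le zero_le_one abs_cos_le_one)
    simpa using le_pn_top continuous_cos cos_periodic 0
  have hone : periodNorm ∞ cos / (2 * π) ^ (1 / (∞ : ℝ≥0∞).toReal) = 1 := by simp [hcos]
  rw [hone, mul_one]
  set φ : ℝ → ℝ := fun t => g t * cos (n * t + γ) + h t * sin (n * t + γ) with hφ
  set r : ℝ → ℝ := fun t => √(g t ^ 2 + h t ^ 2) with hr
  have hφc : Continuous φ := by fun_prop
  have hrc : Continuous r := by fun_prop
  have hφper : Function.Periodic φ (2 * π) := psi_per hgper hhper n γ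
  have hrper : Function.Periodic r (2 * π) := fun t => by simp only [hr, hgper, hhper]
  have hr0 := pn_nonneg ∞ r
  have hφ0 := pn_nonneg ∞ φ
  have hrle : ∀ t, r t ≤ periodNorm ∞ r := fun t => (le_abs_self _).trans (le_pn_top hrc hrper t)
  set c := 4 * π * M / n with hc
  have hc0 : 0 ≤ c := by positivity
  have h1 : periodNorm ∞ φ ≤ periodNorm ∞ r :=
    pn_top_le hr0 fun t => (trig_bound _ _ _).trans (hrle t)
  have h2 : periodNorm ∞ r ≤ periodNorm ∞ φ + c * periodNorm ∞ r := by
    refine pn_top_le (by positivity) fun t => ?_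
    rw [abs_of_nonneg (sqrt_nonneg _)]
    obtain ⟨α, hα⟩ := trig_polar (g t) (h t)
    -- choose the phase
    obtain ⟨y, hy, hcy⟩ := cos_periodic.exists_mem_Ioc (x := (0 : ℝ)) (by positivity : (0:ℝ) < 2 * π)
      (n * t + γ - α)
    set τ := (y - (n * t + γ - α)) / n with hτ
    have hτ0 : 0 ≤ τ := div_nonneg (by linarith [hy.1]) hn0.le
    have hτ1 : τ ≤ 2 * π / n := div_le_div_of_nonneg_right (by linarith [hy.2]) hn0.le
    have e : (n : ℝ) * (t + τ) + γ = y + α := by rw [hτ]; field_simp; ring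
    have h3 := hα (y + α)
    rw [add_sub_cancel_right, ← hcy, cos_zero, mul_one] at h3
    set z : ℝ → ℂ := fun x => (g x : ℂ) + h x * Complex.I with hz
    have nz : ∀ a b : ℝ, ‖(a : ℂ) + b * Complex.I‖ = √(a ^ 2 + b ^ 2) := fun a b =>
      Complex.norm_add_mul_I a b
    have hd : ∀ x, HasDerivAt z (((deriv g x : ℝ) : ℂ) + ((deriv h x : ℝ) : ℂ) * Complex.I) x :=
      fun x => (hg x).hasDerivAt.ofReal_comp.add ((hh x).hasDerivAt.ofReal_comp.mul_const _)
    have h4 : ‖z (t + τ) - z t‖ ≤ (M * periodNorm ∞ r) * ‖(t + τ) - t‖ :=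
      convex_univ.norm_image_sub_le_of_norm_hasDerivWithin_le
        (fun x _ => (hd x).hasDerivWithinAt)
        (fun x _ => by
          rw [nz]
          exact (hb x).trans (mul_le_mul_of_nonneg_left (hrle x) hM0)) trivial trivial
    have e1 : ‖z (t + τ) - z t‖ = √((g (t + τ) - g t) ^ 2 + (h (t + τ) - h t) ^ 2) := by
      rw [← nz]; congr 1; simp only [hz]; push_cast; ring
    rw [e1, add_sub_cancel_left, norm_of_nonneg hτ0] at h4
    have h5 := trig_bound (g (t + τ) - g t) (h (t + τ) - h t) (y + α)
    have h6 : φ (t + τ) - r t =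
        (g (t + τ) - g t) * cos (y + α) + (h (t + τ) - h t) * sin (y + α) := by
      simp only [hφ, hr, e]; rw [← h3]; ring
    rw [← h6] at h5
    have h7 := (abs_le.1 h5).1
    have h8 := (le_abs_self _).trans (le_pn_top hφc hφper (t + τ))
    have h9 : M * periodNorm ∞ r * τ ≤ c * periodNorm ∞ r := by
      calc M * periodNorm ∞ r * τ ≤ M * periodNorm ∞ r * (2 * π / n) := by gcongr
        _ = c / 2 * periodNorm ∞ r := by rw [hc]; ring
        _ ≤ _ := by nlinarith [mul_nonneg hc0 hr0]
    change r t ≤ _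
    linarith
  have := mul_nonneg hc0 hr0
  rw [abs_le]
  constructor <;> linarith

theorem statement6 (s : ℝ≥0∞) (hs : 1 ≤ s) (g h : ℝ → ℝ)
    (hgper : ∀ t, g (t + 2 * π) = g t) (hhper : ∀ t, h (t + 2 * π) = h t)
    (hg : Differentiable ℝ g) (hh : Differentiable ℝ h)
    (hr : ∀ t, Real.sqrt (g t ^ 2 + h t ^ 2) ≠ 0)
    (hMb : BddAbove (Set.range fun t =>
      Real.sqrt (deriv g t ^ 2 + deriv h t ^ 2) / Real.sqrt (g t ^ 2 + h t ^ 2)))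
    (M : ℝ)
    (hM : M = ⨆ t : ℝ, Real.sqrt (deriv g t ^ 2 + deriv h t ^ 2) / Real.sqrt (g t ^ 2 + h t ^ 2))
    (γ : ℝ) (n : ℕ) (hn1 : 1 ≤ n)
    (hn : s ≠ ∞ → 4 * π * s.toReal * M ≤ (n : ℝ)) :
    ∃ δ : ℝ, |δ| < 14 * π ∧
      periodNorm s (fun t => g t * Real.cos (n * t + γ) + h t * Real.sin (n * t + γ)) =
        periodNorm s (fun t => Real.sqrt (g t ^ 2 + h t ^ 2)) *
          (periodNorm s Real.cos / (2 * π) ^ (1 / s.toReal) + δ * M / n) := by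
  have hle : ∀ t, √(deriv g t ^ 2 + deriv h t ^ 2) / √(g t ^ 2 + h t ^ 2) ≤ M := fun t => by
    rw [hM]; exact le_ciSup hMb t
  have hM0 : 0 ≤ M := le_trans (by positivity) (hle 0)
  have hb : ∀ t, √(deriv g t ^ 2 + deriv h t ^ 2) ≤ M * √(g t ^ 2 + h t ^ 2) := fun t =>
    (div_le_iff₀ (lt_of_le_of_ne (sqrt_nonneg _) (hr t).symm)).1 (hle t)
  have hn0 : (0 : ℝ) < n := by exact_mod_cast hn1
  have hpi := pi_pos
  have key : |periodNorm s (fun t => g t * cos (n * t + γ) + h t * sin (n * t + γ)) -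
      periodNorm s (fun t => √(g t ^ 2 + h t ^ 2)) * (periodNorm s cos / (2 * π) ^ (1 / s.toReal))|
      ≤ (4 * π * M / n) * periodNorm s (fun t => √(g t ^ 2 + h t ^ 2)) := by
    by_cases hs' : s = ∞
    · subst hs'
      exact main_top hM0 hgper hhper hg hh hb γ n hn1
    · exact main_fin s hs hs' hM0 hgper hhper hg hh hb γ n hn1 (hn hs')
  have hR0 := pn_nonneg s (fun t => √(g t ^ 2 + h t ^ 2))
  generalize periodNorm s (fun t => √(g t ^ 2 + h t ^ 2)) = R at *
  generalize periodNorm s (fun t => g t * cos (n * t + γ) + h t * sin (n * t + γ)) = P at *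
  generalize periodNorm s cos / (2 * π) ^ (1 / s.toReal) = C at *
  have e : 4 * π * M / n * R = 4 * π * (R * M / n) := by ring
  rw [e] at key
  have hK0 : 0 ≤ R * M / n := by positivity
  rcases hK0.eq_or_lt with hK | hK
  · refine ⟨0, by simpa using hpi, ?_⟩
    rw [← hK, mul_zero] at key
    have := abs_nonpos_iff.1 key
    simp; linarith
  · refine ⟨(P - R * C) / (R * M / n), ?_, ?_⟩
    · rw [abs_div, abs_of_pos hK, div_lt_iff₀ hK]
      nlinarith
    · have e2 : R * (C + (P - R * C) / (R * M / n) * M / n) =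
          R * C + (P - R * C) / (R * M / n) * (R * M / n) := by ring
      rw [e2, div_mul_cancel₀ _ hK.ne']; ring
end

section
/- Let γ>0, r>0, δ∈ℝ and m ≥ 1 with m ≥ (14|δ+1−r|/(γr))^{1/r}. Then ∫_m^∞ e^{-γ t^r} t^δ dt = (e^{-γ m^r}/(γ r)) m^{δ+1−r} (1 + Θ · (|δ+1−r|/(γr)) m^{-r}), where |Θ| ≤ 14/13. In particular, under the same hypothesis, ∫_m^∞ e^{-γ t^r} t^δ dt ≤ (14/13) (e^{-γ m^r}/(γ r)) m^{δ+1−r}. -/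
open MeasureTheory Real

lemma aux_int (γ r m s : ℝ) (hγ : 0 < γ) (hr : 0 < r) (hm1 : 1 ≤ m) :
    IntegrableOn (fun t : ℝ => Real.exp (-γ * t ^ r) * t ^ s) (Set.Ioi m) := by
  have h0 : -1 < max s 0 := lt_of_lt_of_le (by norm_num) (le_max_right s 0)
  have h := (integrableOn_rpow_mul_exp_neg_mul_rpow h0 hr hγ).mono_set
    (Set.Ioi_subset_Ioi (by linarith : (0:ℝ) ≤ m))
  refine Integrable.mono' h ?_ ?_
  · exact (by fun_prop : Measurable (fun t : ℝ => Real.exp (-γ * t ^ r) * t ^ s)).aestronglyMeasurable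
  · refine (ae_restrict_iff' measurableSet_Ioi).2 (Filter.Eventually.of_forall fun t ht => ?_)
    have ht1 : 1 ≤ t := hm1.trans (le_of_lt ht)
    have hp : 0 < t ^ s := rpow_pos_of_pos (by linarith) _
    rw [Real.norm_of_nonneg (by positivity), mul_comm]
    exact mul_le_mul_of_nonneg_right (rpow_le_rpow_of_exponent_le ht1 (le_max_left _ _))
      (Real.exp_pos _).le

lemma aux_ibp (γ r δ m : ℝ) (hγ : 0 < γ) (hr : 0 < r) (hm1 : 1 ≤ m) :
    γ * r * (∫ t in Set.Ioi m, Real.exp (-γ * t ^ r) * t ^ δ) =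
      Real.exp (-γ * m ^ r) * m ^ (δ + 1 - r) +
      (δ + 1 - r) * (∫ t in Set.Ioi m, Real.exp (-γ * t ^ r) * t ^ (δ - r)) := by
  have i1 := aux_int γ r m δ hγ hr hm1
  have i2 := aux_int γ r m (δ - r) hγ hr hm1
  have i3 := aux_int γ r m (δ + 1 - r) hγ hr hm1
  have hd : ∀ x ∈ Set.Ici m, HasDerivAt (fun t : ℝ => Real.exp (-γ * t ^ r) * t ^ (δ + 1 - r))
      ((δ + 1 - r) * (Real.exp (-γ * x ^ r) * x ^ (δ - r))
        - γ * r * (Real.exp (-γ * x ^ r) * x ^ δ)) x := by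
    intro x hx
    have hx0 : 0 < x := lt_of_lt_of_le (by linarith) hx
    have h1 := ((Real.hasDerivAt_rpow_const (p := r) (Or.inl hx0.ne')).const_mul (-γ)).exp
    have h2 := Real.hasDerivAt_rpow_const (p := δ + 1 - r) (Or.inl hx0.ne')
    refine (h1.mul h2).congr_deriv ?_
    have e1 : x ^ δ = x ^ (r - 1) * x ^ (δ + 1 - r) := by
      rw [← rpow_add hx0]; congr 1; ring
    have e2 : x ^ (δ + 1 - r - 1) = x ^ (δ - r) := by congr 1; ring
    rw [e1, e2]; ring
  have i4 := (i2.const_mul (δ + 1 - r)).sub (i1.const_mul (γ * r))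
  have ht := tendsto_zero_of_hasDerivAt_of_integrableOn_Ioi
    (fun x hx => hd x (Set.mem_Ici.2 (le_of_lt hx))) i4 i3
  have hI := integral_Ioi_of_hasDerivAt_of_tendsto' hd i4 ht
  rw [integral_sub (i2.const_mul _) (i1.const_mul _), integral_const_mul, integral_const_mul] at hI
  linarith

lemma aux_J (γ r δ m : ℝ) (hγ : 0 < γ) (hr : 0 < r) (hm1 : 1 ≤ m) :
    0 ≤ (∫ t in Set.Ioi m, Real.exp (-γ * t ^ r) * t ^ (δ - r)) ∧
    (∫ t in Set.Ioi m, Real.exp (-γ * t ^ r) * t ^ (δ - r)) ≤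
      m ^ (-r) * ∫ t in Set.Ioi m, Real.exp (-γ * t ^ r) * t ^ δ := by
  have i1 := aux_int γ r m δ hγ hr hm1
  have i2 := aux_int γ r m (δ - r) hγ hr hm1
  have hm0 : 0 < m := by linarith
  constructor
  · refine setIntegral_nonneg measurableSet_Ioi fun t ht => ?_
    have : 0 < t := hm0.trans ht
    positivity
  · rw [← integral_const_mul]
    refine setIntegral_mono_on i2 (i1.const_mul _) measurableSet_Ioi fun t ht => ?_
    have ht0 : 0 < t := hm0.trans ht
    have e : t ^ (δ - r) = t ^ (-r) * t ^ δ := by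
      rw [← rpow_add ht0]; congr 1; ring
    have h : t ^ (-r) ≤ m ^ (-r) :=
      rpow_le_rpow_of_nonpos hm0 (le_of_lt ht) (by linarith)
    have hp : 0 ≤ Real.exp (-γ * t ^ r) * t ^ δ := by positivity
    rw [e]
    nlinarith [mul_le_mul_of_nonneg_right h hp]

theorem statement10 (γ r δ m : ℝ) (hγ : 0 < γ) (hr : 0 < r) (hm1 : 1 ≤ m)
    (hm : (14 * |δ + 1 - r| / (γ * r)) ^ (1 / r) ≤ m) :
    ∃ Θ : ℝ, |Θ| ≤ 14 / 13 ∧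
      (∫ t in Set.Ioi m, Real.exp (-γ * t ^ r) * t ^ δ) =
        Real.exp (-γ * m ^ r) / (γ * r) * m ^ (δ + 1 - r) *
          (1 + Θ * (|δ + 1 - r| / (γ * r)) * m ^ (-r)) ∧
      (∫ t in Set.Ioi m, Real.exp (-γ * t ^ r) * t ^ δ) ≤
        14 / 13 * (Real.exp (-γ * m ^ r) / (γ * r)) * m ^ (δ + 1 - r) := by
  have hm0 : 0 < m := by linarith
  have hI := aux_ibp γ r δ m hγ hr hm1
  obtain ⟨hJ0, hJ⟩ := aux_J γ r δ m hγ hr hm1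
  have hc : 0 < γ * r := by positivity
  have hx : |δ + 1 - r| / (γ * r) * m ^ (-r) ≤ 1 / 14 := by
    have h1 := rpow_le_rpow (by positivity) hm hr.le
    rw [← rpow_mul (by positivity), one_div_mul_cancel hr.ne', rpow_one] at h1
    rw [rpow_neg hm0.le, ← div_eq_mul_inv, div_le_iff₀ (by positivity)]
    have : 14 * |δ + 1 - r| / (γ * r) = 14 * (|δ + 1 - r| / (γ * r)) := by ring
    linarith
  have hG : 0 < Real.exp (-γ * m ^ r) / (γ * r) * m ^ (δ + 1 - r) := by positivity
  have hGe : Real.exp (-γ * m ^ r) * m ^ (δ + 1 - r) =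
    γ * r * (Real.exp (-γ * m ^ r) / (γ * r) * m ^ (δ + 1 - r)) := by field_simp
  rw [hGe] at hI
  rw [mul_assoc (14 / 13 : ℝ)]
  simp only [mul_assoc _ _ (m ^ (-r))]
  generalize Real.exp (-γ * m ^ r) / (γ * r) * m ^ (δ + 1 - r) = G at *
  generalize (∫ t in Set.Ioi m, Real.exp (-γ * t ^ r) * t ^ δ) = I at *
  generalize (∫ t in Set.Ioi m, Real.exp (-γ * t ^ r) * t ^ (δ - r)) = J at *
  have hmr : 0 < m ^ (-r) := by positivity
  generalize m ^ (-r) = M at *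
  generalize δ + 1 - r = a at *
  generalize γ * r = c at *
  have hx0 : 0 ≤ |a| / c * M := by positivity
  have hI0 : 0 ≤ I := nonneg_of_mul_nonneg_right (hJ0.trans hJ) hmr
  have hdiff : |I - G| ≤ |a| / c * M * I := by
    have : I - G = a / c * J := by field_simp; linarith
    rw [this, abs_mul, abs_div, abs_of_pos hc, abs_of_nonneg hJ0, mul_assoc]
    gcongr
  generalize |a| / c * M = x at *
  have hIG : I ≤ 14 / 13 * G := by
    have := (abs_le.1 hdiff).2
    nlinarith
  rcases hx0.eq_or_lt with h | h
  · subst h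
    refine ⟨0, by norm_num, ?_, hIG⟩
    have : I - G = 0 := by
      apply abs_eq_zero.1
      exact le_antisymm (by simpa using hdiff) (abs_nonneg _)
    linarith
  · refine ⟨(I - G) / (G * x), ?_, by field_simp; ring, hIG⟩
    rw [abs_div, abs_of_pos (by positivity : 0 < G * x), div_le_iff₀ (by positivity)]
    nlinarith
end

section
/- Let α>0, 0<r<1, 1≤p≤∞. For t∈[−π,π] and integers n ≥ n₂(α,r,p), the function Q_n(t) := 2 Σ_{j=n}^∞ e^{-α j^r} ∫_0^∞ e^{-α(j+u)^r} cos(ut) du satisfies Q_n(t) = (e^{-2α n^r}/(t² + (αr n^{r-1})²)) · (1 + Θ(t) · ((1−r)/(αr) · n^{-r} + αr · n^{-(1-r)})), where |Θ(t)| < 5. In particular Q_n(t) > 0 for all t∈[−π,π] and n ≥ n₂(α,r,p). -/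
open MeasureTheory Real Filter
open scoped ENNReal

/-- `n₂(α,r,p)`: the smallest positive integer `n` with
`(1/(αr)) n^{-r} + αr χ(p) n^{-(1-r)} ≤ 1/14`, where `χ(p)=p` for finite `p` and `χ(∞)=1`. -/
noncomputable def n₂ (α r : ℝ) (p : ℝ≥0∞) : ℕ :=
  sInf {n : ℕ | 0 < n ∧
    1 / (α * r) * (n : ℝ) ^ (-r) +
      α * r * (if p = ∞ then 1 else p.toReal) * (n : ℝ) ^ (-(1 - r)) ≤ 1 / 14}

/-- `Q_n(t) = 2 Σ_{j=n}^∞ e^{-α j^r} ∫_0^∞ e^{-α(j+u)^r} cos(ut) du`. -/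
noncomputable def Qn (α r : ℝ) (n : ℕ) (t : ℝ) : ℝ :=
  2 * ∑' j : ℕ, Real.exp (-α * ((j + n : ℕ) : ℝ) ^ r) *
    ∫ u in Set.Ioi (0 : ℝ), Real.exp (-α * (((j + n : ℕ) : ℝ) + u) ^ r) * Real.cos (u * t)

/-- `R_n(t) = 2 Σ_{k=1}^∞ Σ_{j=n}^∞ e^{-α j^r} ∫_0^∞ e^{-α(j+u)^r}(cos((t−2πk)u)+cos((t+2πk)u))du`. -/
noncomputable def Rn (α r : ℝ) (n : ℕ) (t : ℝ) : ℝ :=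
  2 * ∑' k : ℕ, ∑' j : ℕ, Real.exp (-α * ((j + n : ℕ) : ℝ) ^ r) *
    ∫ u in Set.Ioi (0 : ℝ), Real.exp (-α * (((j + n : ℕ) : ℝ) + u) ^ r) *
      (Real.cos ((t - 2 * π * ((k : ℝ) + 1)) * u) + Real.cos ((t + 2 * π * ((k : ℝ) + 1)) * u))

structure Hyp (φ p : ℝ → ℝ) (N s a : ℝ) : Prop where
  N0 : 0 < N
  s0 : 0 ≤ s
  s1 : s ≤ 1
  a0 : 0 ≤ a
  a1 : a ≤ 1 / 14
  φ0 : ∀ x, N ≤ x → 0 ≤ φ x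
  dφ : ∀ x, N ≤ x → HasDerivAt φ (p x) x
  dp : ∀ x, N ≤ x → HasDerivAt p (-(s * p x / x)) x
  pos : ∀ x, N ≤ x → 0 < p x
  ha : ∀ x, N ≤ x → 1 / x ≤ a * p x
  lim1 : Tendsto (fun x => Real.exp (-φ x) / p x) atTop (nhds 0)
  lim2 : Tendsto (fun x => Real.exp (-φ x) / p x ^ 2) atTop (nhds 0)
  int : ∀ x, N ≤ x → IntegrableOn (fun u => Real.exp (-φ (x + u))) (Set.Ioi 0)

namespace Hyp

noncomputable def hh (p : ℝ → ℝ) (t x : ℝ) : ℝ := (t ^ 2 + p x ^ 2)⁻¹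

variable {φ p : ℝ → ℝ} {N s a : ℝ}

lemma hh_pos (H : Hyp φ p N s a) (t : ℝ) {x : ℝ} (hx : N ≤ x) : 0 < hh p t x := by
  have := H.pos x hx
  unfold hh; positivity

lemma hh_mul (H : Hyp φ p N s a) (t : ℝ) {x : ℝ} (hx : N ≤ x) :
    (t ^ 2 + p x ^ 2) * hh p t x = 1 := by
  have := H.pos x hx
  unfold hh; field_simp

lemma p2h_le (H : Hyp φ p N s a) (t : ℝ) {x : ℝ} (hx : N ≤ x) :
    p x ^ 2 * hh p t x ≤ 1 := by
  have h1 := H.hh_mul t hx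
  have h2 := H.hh_pos t hx
  nlinarith [mul_nonneg (sq_nonneg t) h2.le]

lemma dhh (H : Hyp φ p N s a) (t : ℝ) {x : ℝ} (hx : N ≤ x) :
    HasDerivAt (hh p t) (2 * s * p x ^ 2 / x * hh p t x ^ 2) x := by
  have h0 := H.pos x hx
  have hne : t ^ 2 + p x ^ 2 ≠ 0 := by positivity
  have := (((H.dp x hx).pow 2).const_add (t ^ 2)).inv hne
  have hx0 : x ≠ 0 := (H.N0.trans_le hx).ne'
  refine this.congr_deriv ?_
  unfold hh
  simp only [Pi.pow_apply]
  field_simp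
  simp
  ring

lemma dF (H : Hyp φ p N s a) (t : ℝ) {x : ℝ} (hx : N ≤ x) :
    HasDerivAt (fun x => Real.exp (-φ x) * hh p t x / x)
      (Real.exp (-φ x) * hh p t x / x * (-p x + 2 * s * (p x ^ 2 * hh p t x) / x - 1 / x)) x := by
  have hx0 : x ≠ 0 := (H.N0.trans_le hx).ne'
  refine (((H.dφ x hx).neg.exp.mul (H.dhh t hx)).div (hasDerivAt_id x) hx0).congr_deriv ?_
  simp only [id, Pi.mul_apply, Pi.neg_apply]
  field_simp

lemma dF_le (H : Hyp φ p N s a) (t : ℝ) {x : ℝ} (hx : N ≤ x) :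
    Real.exp (-φ x) * hh p t x / x * (-p x + 2 * s * (p x ^ 2 * hh p t x) / x - 1 / x)
      ≤ -(13 / 14) * (Real.exp (-φ x) * hh p t x / x * p x) := by
  have hx0 : 0 < x := H.N0.trans_le hx
  have h1 := H.p2h_le t hx
  have h2 := H.hh_pos t hx
  have h3 := H.ha x hx
  have h4 := H.pos x hx
  have h5 : 0 < 1 / x := by positivity
  have h6 : s * (p x ^ 2 * hh p t x) ≤ 1 := by
    have : 0 ≤ p x ^ 2 * hh p t x := by positivity
    nlinarith [H.s0, H.s1]
  have h7 : 2 * s * (p x ^ 2 * hh p t x) / x ≤ 2 * (1 / x) := by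
    rw [mul_one_div]; gcongr; linarith
  have h8 : a * p x ≤ 1 / 14 * p x := by gcongr; exact H.a1
  have h9 : -p x + 2 * s * (p x ^ 2 * hh p t x) / x - 1 / x ≤ -(13 / 14) * p x := by linarith
  calc _ ≤ Real.exp (-φ x) * hh p t x / x * (-(13 / 14) * p x) := by gcongr
    _ = _ := by ring

lemma dM (H : Hyp φ p N s a) (t : ℝ) {x : ℝ} (hx : N ≤ x) :
    HasDerivAt (fun x => Real.exp (-2 * φ x) * hh p t x)
      (-(2 * Real.exp (-2 * φ x) * p x * hh p t x) +
        2 * s * Real.exp (-2 * φ x) * hh p t x * (p x ^ 2 * hh p t x) / x) x := by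
  refine (((H.dφ x hx).const_mul (-2)).exp.mul (H.dhh t hx)).congr_deriv ?_
  ring

lemma dg (H : Hyp φ p N s a) (t : ℝ) {x : ℝ} (hx : N ≤ x) :
    HasDerivAt (fun x => 2 * Real.exp (-2 * φ x) * p x * hh p t x)
      (2 * Real.exp (-2 * φ x) * p x * hh p t x *
        (-2 * p x - s / x + 2 * s * (p x ^ 2 * hh p t x) / x)) x := by
  refine (((((H.dφ x hx).const_mul (-2)).exp.const_mul 2).mul (H.dp x hx)).mul
    (H.dhh t hx)).congr_deriv ?_
  simp only [Pi.mul_apply]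
  ring

lemma g_anti (H : Hyp φ p N s a) (t : ℝ) :
    AntitoneOn (fun x => 2 * Real.exp (-2 * φ x) * p x * hh p t x) (Set.Ici N) := by
  apply antitoneOn_of_deriv_nonpos (convex_Ici N)
  · intro x hx
    exact (H.dg t hx).continuousAt.continuousWithinAt
  · intro x hx
    rw [interior_Ici] at hx
    exact (H.dg t (le_of_lt hx)).differentiableAt.differentiableWithinAt
  · intro x hx
    rw [interior_Ici] at hx
    have hx : N ≤ x := le_of_lt hx
    rw [(H.dg t hx).deriv]
    have hx0 : 0 < x := H.N0.trans_le hx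
    have h1 := H.p2h_le t hx
    have h2 := H.hh_pos t hx
    have h3 := H.ha x hx
    have h4 := H.pos x hx
    have h5 : 0 < 1 / x := by positivity
    have h8 : a * p x ≤ 1 / 14 * p x := by gcongr; exact H.a1
    have h6 : s * (p x ^ 2 * hh p t x) ≤ s := by
      have := H.s0
      nlinarith
    have h7 : 2 * s * (p x ^ 2 * hh p t x) / x ≤ 2 * s / x := by
      gcongr ?_ / x
      linarith
    have h9 : s / x ≤ 1 / x := by gcongr; exact H.s1
    have h10 : 2 * s / x = 2 * (s / x) := by ring
    apply mul_nonpos_of_nonneg_of_nonpos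
    · positivity
    · linarith

lemma step (H : Hyp φ p N s a) (t : ℝ) {x : ℝ} (hx : N ≤ x) :
    (1 - s * a) * (2 * Real.exp (-2 * φ (x + 1)) * p (x + 1) * hh p t (x + 1)) ≤
      Real.exp (-2 * φ x) * hh p t x - Real.exp (-2 * φ (x + 1)) * hh p t (x + 1) ∧
    Real.exp (-2 * φ x) * hh p t x - Real.exp (-2 * φ (x + 1)) * hh p t (x + 1) ≤
      2 * Real.exp (-2 * φ x) * p x * hh p t x := by
  obtain ⟨c, ⟨hc1, hc2⟩, hc⟩ := exists_hasDerivAt_eq_slope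
    (fun x => Real.exp (-2 * φ x) * hh p t x)
    (fun x => (-(2 * Real.exp (-2 * φ x) * p x * hh p t x) +
        2 * s * Real.exp (-2 * φ x) * hh p t x * (p x ^ 2 * hh p t x) / x)) (lt_add_one x)
    (fun y hy => (H.dM t (hx.trans hy.1)).continuousAt.continuousWithinAt)
    (fun y hy => H.dM t (hx.trans hy.1.le))
  have hNc : N ≤ c := hx.trans hc1.le
  have hN1 : N ≤ x + 1 := by linarith
  have g1 : 2 * Real.exp (-2 * φ (x + 1)) * p (x + 1) * hh p t (x + 1) ≤
    2 * Real.exp (-2 * φ c) * p c * hh p t c := H.g_anti t hNc hN1 hc2.le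
  have g2 : 2 * Real.exp (-2 * φ c) * p c * hh p t c ≤
    2 * Real.exp (-2 * φ x) * p x * hh p t x := H.g_anti t hx hNc hc1.le
  have hc0 : 0 < c := H.N0.trans_le hNc
  have h1 := H.p2h_le t hNc
  have h2 := H.hh_pos t hNc
  have h3 := H.ha c hNc
  have h4 := H.pos c hNc
  have hs := H.s0
  have e1 : 0 ≤ 2 * s * Real.exp (-2 * φ c) * hh p t c * (p c ^ 2 * hh p t c) / c := by positivity
  have e2 : 2 * s * Real.exp (-2 * φ c) * hh p t c * (p c ^ 2 * hh p t c) / c ≤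
      s * a * (2 * Real.exp (-2 * φ c) * p c * hh p t c) := by
    calc _ = 2 * s * Real.exp (-2 * φ c) * hh p t c * (p c ^ 2 * hh p t c) * (1 / c) := by ring
      _ ≤ 2 * s * Real.exp (-2 * φ c) * hh p t c * 1 * (a * p c) := by gcongr
      _ = _ := by ring
  have hsa : s * a ≤ 1 := by nlinarith [H.s1, H.a1, H.a0]
  have e3 := mul_le_mul_of_nonneg_left g1 (sub_nonneg.2 hsa)
  simp only [add_sub_cancel_left, div_one] at hc
  constructor <;> linarith

lemma limM (H : Hyp φ p N s a) (t : ℝ) :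
    Tendsto (fun x => Real.exp (-2 * φ x) * hh p t x) atTop (nhds 0) := by
  refine tendsto_of_tendsto_of_tendsto_of_le_of_le' tendsto_const_nhds H.lim2 ?_ ?_
  · filter_upwards [eventually_ge_atTop N] with x hx
    have := H.hh_pos t hx
    positivity
  · filter_upwards [eventually_ge_atTop N] with x hx
    have h1 := H.hh_pos t hx
    have h2 := H.p2h_le t hx
    have h4 := H.pos x hx
    have h5 := H.φ0 x hx
    rw [le_div_iff₀ (by positivity)]
    calc _ = Real.exp (-2 * φ x) * (p x ^ 2 * hh p t x) := by ring
      _ ≤ Real.exp (-φ x) * 1 := by gcongr; linarith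
      _ = _ := by ring

lemma limF (H : Hyp φ p N s a) (t : ℝ) :
    Tendsto (fun x => Real.exp (-φ x) * hh p t x / x) atTop (nhds 0) := by
  refine tendsto_of_tendsto_of_tendsto_of_le_of_le' tendsto_const_nhds H.lim2 ?_ ?_
  · filter_upwards [eventually_ge_atTop N, eventually_ge_atTop 1] with x hx hx1
    have := H.hh_pos t hx
    positivity
  · filter_upwards [eventually_ge_atTop N, eventually_ge_atTop 1] with x hx hx1
    have h1 := H.hh_pos t hx
    have h2 := H.p2h_le t hx
    have h4 := H.pos x hx
    rw [le_div_iff₀ (by positivity)]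
    calc _ = Real.exp (-φ x) * (p x ^ 2 * hh p t x) / x := by ring
      _ ≤ Real.exp (-φ x) * 1 / 1 := by gcongr
      _ = _ := by ring

lemma trig_bound (q t θ : ℝ) :
    |(q ^ 2 - t ^ 2) * Real.cos θ - 2 * q * t * Real.sin θ| ≤ t ^ 2 + q ^ 2 := by
  apply abs_le_of_sq_le_sq _ (by positivity)
  have := Real.sin_sq_add_cos_sq θ
  have e : (t ^ 2 + q ^ 2) ^ 2 = ((q ^ 2 - t ^ 2) ^ 2 + (2 * q * t) ^ 2) *
    (Real.sin θ ^ 2 + Real.cos θ ^ 2) := by rw [this]; ring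
  rw [e]
  nlinarith [sq_nonneg ((q ^ 2 - t ^ 2) * Real.sin θ + 2 * q * t * Real.cos θ)]

lemma trig_bound2 (q t θ : ℝ) :
    (t * Real.sin θ - q * Real.cos θ) ^ 2 ≤ t ^ 2 + q ^ 2 := by
  have := Real.sin_sq_add_cos_sq θ
  have e : (t ^ 2 + q ^ 2) = (t ^ 2 + q ^ 2) *
    (Real.sin θ ^ 2 + Real.cos θ ^ 2) := by rw [this]; ring
  rw [e]
  nlinarith [sq_nonneg (q * Real.sin θ + t * Real.cos θ)]

lemma dA (H : Hyp φ p N s a) (t : ℝ) {X u : ℝ} (hx : N ≤ X + u) :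
    HasDerivAt (fun u => Real.exp (-φ (X + u)) *
        (t * Real.sin (u * t) - p (X + u) * Real.cos (u * t)) * hh p t (X + u))
      (Real.exp (-φ (X + u)) * Real.cos (u * t) +
        -(s * p (X + u) / (X + u)) * Real.exp (-φ (X + u)) * hh p t (X + u) ^ 2 *
        ((p (X + u) ^ 2 - t ^ 2) * Real.cos (u * t) - 2 * p (X + u) * t * Real.sin (u * t))) u := by
  have d0 : HasDerivAt (fun u => X + u) 1 u := (hasDerivAt_id u).const_add X
  have d1 := (H.dφ _ hx).comp u d0
  have d2 := (H.dp _ hx).comp u d0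
  have d3 := (H.dhh t hx).comp u d0
  have d4 : HasDerivAt (fun u => u * t) t u := by simpa using (hasDerivAt_id u).mul_const t
  have := (d1.neg.exp.mul ((d4.sin.const_mul t).sub (d2.mul d4.cos))).mul d3
  refine this.congr_deriv ?_
  simp only [Function.comp_apply, Pi.mul_apply, Pi.sub_apply, Pi.neg_apply, mul_one]
  have h0 := H.pos _ hx
  have hne : t ^ 2 + p (X + u) ^ 2 ≠ 0 := by positivity
  have hx0 : X + u ≠ 0 := (H.N0.trans_le hx).ne'
  unfold hh
  field_simp
  ring

lemma limA (H : Hyp φ p N s a) (t X : ℝ) :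
    Tendsto (fun u => Real.exp (-φ (X + u)) *
        (t * Real.sin (u * t) - p (X + u) * Real.cos (u * t)) * hh p t (X + u))
      atTop (nhds 0) := by
  have hs : Tendsto (fun u => X + u) atTop atTop := tendsto_atTop_add_const_left _ _ tendsto_id
  refine squeeze_zero_norm' ?_ (H.lim1.comp hs)
  filter_upwards [hs.eventually (eventually_ge_atTop N)] with u hx
  have h1 := H.hh_pos t hx
  have h3 := H.hh_mul t hx
  have h2 := H.p2h_le t hx
  have h4 := H.pos _ hx
  rw [Function.comp_apply, mul_assoc, norm_mul, Real.norm_eq_abs, abs_of_pos (Real.exp_pos _),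
    div_eq_mul_inv]
  gcongr
  rw [Real.norm_eq_abs]
  apply abs_le_of_sq_le_sq _ (by positivity)
  rw [mul_pow]
  calc _ ≤ (t ^ 2 + p (X + u) ^ 2) * hh p t (X + u) ^ 2 := by
        gcongr; exact trig_bound2 _ _ _
    _ = hh p t (X + u) := by rw [sq (hh _ _ _), ← mul_assoc, h3, one_mul]
    _ ≤ _ := by
      rw [inv_pow, le_inv_comm₀ h1 (by positivity)]
      rw [← one_div, le_div_iff₀ h1]; exact h2

lemma integral_bound (H : Hyp φ p N s a) (t : ℝ) {X : ℝ} (hX : N ≤ X) :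
    |(∫ u in Set.Ioi (0 : ℝ), Real.exp (-φ (X + u)) * Real.cos (u * t)) -
      Real.exp (-φ X) * p X * hh p t X| ≤
      14 / 13 * s * (Real.exp (-φ X) * hh p t X / X) := by
  have hXu : ∀ u, 0 ≤ u → N ≤ X + u := fun u hu => by linarith
  have hs := H.s0
  -- the comparison function
  have dFu : ∀ u ∈ Set.Ici (0 : ℝ), HasDerivAt
      (fun u => Real.exp (-φ (X + u)) * hh p t (X + u) / (X + u))
      (Real.exp (-φ (X + u)) * hh p t (X + u) / (X + u) *
        (-p (X + u) + 2 * s * (p (X + u) ^ 2 * hh p t (X + u)) / (X + u) - 1 / (X + u))) u := by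
    intro u hu
    exact (H.dF t (hXu u hu)).comp_const_add X u
  have hlim : Tendsto (fun u => X + u) atTop atTop := tendsto_atTop_add_const_left _ _ tendsto_id
  have limFu : Tendsto (fun u => Real.exp (-φ (X + u)) * hh p t (X + u) / (X + u)) atTop
      (nhds 0) := (H.limF t).comp hlim
  have npos : ∀ u ∈ Set.Ioi (0 : ℝ), (Real.exp (-φ (X + u)) * hh p t (X + u) / (X + u) *
        (-p (X + u) + 2 * s * (p (X + u) ^ 2 * hh p t (X + u)) / (X + u) - 1 / (X + u))) ≤ 0 := by
    intro u hu
    have hu' := hXu u (le_of_lt hu)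
    refine (H.dF_le t hu').trans ?_
    have := H.hh_pos t hu'
    have := H.pos _ hu'
    have := H.N0.trans_le hu'
    have : 0 < (Real.exp (-φ (X + u)) * hh p t (X + u) / (X + u) * p (X + u)) := by positivity
    linarith
  have intF := integrableOn_Ioi_deriv_of_nonpos' dFu npos limFu
  have valF := integral_Ioi_of_hasDerivAt_of_nonpos' dFu npos limFu
  -- the main integrand
  have int1 : IntegrableOn (fun u => Real.exp (-φ (X + u)) * Real.cos (u * t)) (Set.Ioi 0) := by
    refine (H.int X hX).mul_bdd (c := 1) ?_ ?_
    · exact (by fun_prop : Continuous fun u : ℝ => Real.cos (u * t)).aestronglyMeasurable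
    · exact Eventually.of_forall fun u => by simpa using Real.abs_cos_le_one _
  have cont : ContinuousOn (fun u => -(s * p (X + u) / (X + u)) * Real.exp (-φ (X + u)) *
      hh p t (X + u) ^ 2 * ((p (X + u) ^ 2 - t ^ 2) * Real.cos (u * t) -
        2 * p (X + u) * t * Real.sin (u * t))) (Set.Ioi 0) := by
    intro u hu
    have hu' := hXu u (le_of_lt hu)
    have c0 : ContinuousAt (fun u => X + u) u := by fun_prop
    have c1 : ContinuousAt (fun u => φ (X + u)) u :=
      ContinuousAt.comp (f := fun u => X + u) (H.dφ _ hu').continuousAt c0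
    have c2 : ContinuousAt (fun u => p (X + u)) u :=
      ContinuousAt.comp (f := fun u => X + u) (H.dp _ hu').continuousAt c0
    have c3 : ContinuousAt (fun u => hh p t (X + u)) u :=
      ContinuousAt.comp (f := fun u => X + u) (H.dhh t hu').continuousAt c0
    have hx0 : X + u ≠ 0 := (H.N0.trans_le hu').ne'
    apply ContinuousAt.continuousWithinAt
    have c4 : ContinuousAt (fun u : ℝ => Real.cos (u * t)) u := by fun_prop
    have c5 : ContinuousAt (fun u : ℝ => Real.sin (u * t)) u := by fun_prop
    exact (((((continuousAt_const.mul c2).div c0 hx0).neg.mul c1.neg.rexp).mul (c3.pow 2))).mul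
      ((((c2.pow 2).sub continuousAt_const).mul c4).sub
        (((continuousAt_const.mul c2).mul continuousAt_const).mul c5))
  have bd : ∀ u ∈ Set.Ioi (0 : ℝ), ‖-(s * p (X + u) / (X + u)) * Real.exp (-φ (X + u)) *
      hh p t (X + u) ^ 2 * ((p (X + u) ^ 2 - t ^ 2) * Real.cos (u * t) -
        2 * p (X + u) * t * Real.sin (u * t))‖ ≤ -(14 / 13 * s) *
        (Real.exp (-φ (X + u)) * hh p t (X + u) / (X + u) *
        (-p (X + u) + 2 * s * (p (X + u) ^ 2 * hh p t (X + u)) / (X + u) - 1 / (X + u))) := by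
    intro u hu
    have hu' := hXu u (le_of_lt hu)
    have h1 := H.hh_pos t hu'
    have h2 := H.pos _ hu'
    have h3 := H.N0.trans_le hu'
    have h4 := H.hh_mul t hu'
    have h5 := H.dF_le t hu'
    rw [norm_mul, Real.norm_eq_abs, Real.norm_eq_abs, neg_mul, neg_mul, abs_neg,
      abs_of_nonneg (by positivity)]
    calc _ ≤ s * p (X + u) / (X + u) * Real.exp (-φ (X + u)) * hh p t (X + u) ^ 2 *
          (t ^ 2 + p (X + u) ^ 2) := by gcongr; exact trig_bound _ _ _
      _ = s * p (X + u) / (X + u) * Real.exp (-φ (X + u)) * hh p t (X + u) *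
          ((t ^ 2 + p (X + u) ^ 2) * hh p t (X + u)) := by ring
      _ = 14 / 13 * s * (13 / 14 * (Real.exp (-φ (X + u)) * hh p t (X + u) / (X + u)
          * p (X + u))) := by rw [h4]; ring
      _ ≤ 14 / 13 * s * -(Real.exp (-φ (X + u)) * hh p t (X + u) / (X + u) *
        (-p (X + u) + 2 * s * (p (X + u) ^ 2 * hh p t (X + u)) / (X + u) - 1 / (X + u))) := by
          gcongr; linarith
      _ = _ := by ring
  have int2 := (intF.const_mul (-(14 / 13 * s))).mono'
    (cont.aestronglyMeasurable measurableSet_Ioi) (ae_restrict_of_forall_mem measurableSet_Ioi bd)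
  have key := integral_Ioi_of_hasDerivAt_of_tendsto' (fun u hu => H.dA t (X := X) (hXu u hu))
    (int1.add int2) (H.limA t X)
  rw [integral_add int1 int2] at key
  have bound := norm_integral_le_of_norm_le (intF.const_mul (-(14 / 13 * s)))
    (ae_restrict_of_forall_mem measurableSet_Ioi bd)
  rw [integral_const_mul, valF] at bound
  simp only [add_zero, zero_mul, Real.sin_zero, Real.cos_zero, mul_zero, mul_one, zero_sub] at key
  rw [Real.norm_eq_abs] at bound
  simp only [add_zero] at bound
  rw [show ∀ a b c : ℝ, a - b = -(c + b - (a + c)) by intros; ring, abs_neg]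
  pick_goal 2
  · exact ∫ u in Set.Ioi (0 : ℝ), -(s * p (X + u) / (X + u)) * Real.exp (-φ (X + u)) *
      hh p t (X + u) ^ 2 * ((p (X + u) ^ 2 - t ^ 2) * Real.cos (u * t) -
        2 * p (X + u) * t * Real.sin (u * t))
  rw [key]
  convert bound using 1
  · congr 1; ring
  · ring

end Hyp

lemma seq_bound (G m : ℕ → ℝ) (δ : ℝ) (hδ : δ < 1) (hG : ∀ j, 0 ≤ G j) (hm : ∀ j, 0 ≤ m j)
    (h1 : ∀ j, (1 - δ) * G (j + 1) ≤ m j - m (j + 1)) (h2 : ∀ j, m j - m (j + 1) ≤ G j)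
    (hlim : Tendsto m atTop (nhds 0)) :
    Summable G ∧ m 0 ≤ ∑' j, G j ∧ ∑' j, G j ≤ G 0 + m 0 / (1 - δ) := by
  have hδ' : 0 < 1 - δ := by linarith
  have b1 : ∀ k, ∑ i ∈ Finset.range k, G (i + 1) ≤ m 0 / (1 - δ) := by
    intro k
    rw [le_div_iff₀ hδ', mul_comm, Finset.mul_sum]
    calc _ ≤ ∑ i ∈ Finset.range k, (m i - m (i + 1)) := Finset.sum_le_sum fun i _ => h1 i
      _ = m 0 - m k := Finset.sum_range_sub' m k
      _ ≤ _ := by linarith [hm k]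
  have s1 : Summable fun i => G (i + 1) := summable_of_sum_range_le (fun i => hG _) b1
  have s2 : Summable G := (summable_nat_add_iff 1).1 s1
  refine ⟨s2, ?_, ?_⟩
  · have t1 : Tendsto (fun k => m 0 - m k) atTop (nhds (m 0 - 0)) := tendsto_const_nhds.sub hlim
    rw [sub_zero] at t1
    refine le_of_tendsto_of_tendsto' t1 s2.hasSum.tendsto_sum_nat fun k => ?_
    rw [← Finset.sum_range_sub' m k]
    exact Finset.sum_le_sum fun i _ => h2 i
  · rw [s2.tsum_eq_zero_add]
    gcongr
    exact Real.tsum_le_of_sum_range_le (fun i => hG _) b1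

lemma final_arith (T S m δ b : ℝ) (hm : 0 < m) (hδ0 : 0 ≤ δ) (hb : 0 < b)
    (hδb : δ + b ≤ 1 / 14) (h1 : m ≤ S) (h2 : S ≤ 2 * b * m + m / (1 - δ))
    (h3 : |T - S| ≤ 14 / 13 * δ * S) :
    (∃ Θ : ℝ, |Θ| < 5 ∧ T = m * (1 + Θ * (δ + b))) ∧ 0 < T := by
  have h4 : m / (1 - δ) ≤ m * (1 + 14 / 13 * δ) := by
    rw [div_le_iff₀ (by linarith), mul_assoc]
    have : 1 ≤ (1 + 14 / 13 * δ) * (1 - δ) := by nlinarith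
    nlinarith
  have h5 : S ≤ m * (1 + 14 / 13 * δ + 2 * b) := by linarith
  obtain ⟨h6, h7⟩ := abs_le.1 h3
  have h8 : T - m ≤ m * (4 * (δ + b)) := by
    have : T ≤ S * (1 + 14 / 13 * δ) := by linarith
    have h9 : S * (1 + 14 / 13 * δ) ≤ m * (1 + 14 / 13 * δ + 2 * b) * (1 + 14 / 13 * δ) := by
      gcongr
    have h10 : (1 + 14 / 13 * δ + 2 * b) * (1 + 14 / 13 * δ) ≤ 1 + 4 * (δ + b) := by nlinarith
    nlinarith
  have h11 : -(m * (4 * (δ + b))) ≤ T - m := by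
    have h12 : m * (1 - 14 / 13 * δ) ≤ S * (1 - 14 / 13 * δ) := by
      apply mul_le_mul_of_nonneg_right h1; linarith
    nlinarith [mul_nonneg hm.le hδ0, mul_pos hm hb]
  have hE : 0 < δ + b := by linarith
  refine ⟨⟨(T / m - 1) / (δ + b), ?_, ?_⟩, ?_⟩
  · rw [abs_div, abs_of_pos hE, div_lt_iff₀ hE]
    have e : T / m - 1 = (T - m) / m := by field_simp
    rw [e, abs_div, abs_of_pos hm, div_lt_iff₀ hm]
    have : |T - m| ≤ m * (4 * (δ + b)) := abs_le.2 ⟨h11, h8⟩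
    nlinarith [mul_pos hm hE]
  · field_simp
    ring
  · nlinarith

lemma Hyp.main {φ p : ℝ → ℝ} {s a : ℝ} {n : ℕ} (H : Hyp φ p n s a) (t : ℝ)
    (hab : s * a + p n ≤ 1 / 14) :
    (∃ Θ : ℝ, |Θ| < 5 ∧
      2 * ∑' j : ℕ, Real.exp (-φ ((j + n : ℕ) : ℝ)) * ∫ u in Set.Ioi (0 : ℝ),
        Real.exp (-φ (((j + n : ℕ) : ℝ) + u)) * Real.cos (u * t) =
      Real.exp (-2 * φ n) * Hyp.hh p t n * (1 + Θ * (s * a + p n))) ∧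
    0 < 2 * ∑' j : ℕ, Real.exp (-φ ((j + n : ℕ) : ℝ)) * ∫ u in Set.Ioi (0 : ℝ),
        Real.exp (-φ (((j + n : ℕ) : ℝ) + u)) * Real.cos (u * t) := by
  have hx : ∀ j : ℕ, (n : ℝ) ≤ ((j + n : ℕ) : ℝ) := fun j => by
    push_cast; linarith [Nat.cast_nonneg (α := ℝ) j]
  have hs := H.s0
  have ha := H.a0
  have hpn := H.pos n le_rfl
  have hcast : ∀ j : ℕ, ((j + 1 + n : ℕ) : ℝ) = ((j + n : ℕ) : ℝ) + 1 := fun j => by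
    push_cast; ring
  have htop : Tendsto (fun j : ℕ => ((j + n : ℕ) : ℝ)) atTop atTop :=
    tendsto_natCast_atTop_atTop.comp (tendsto_add_atTop_nat n)
  set G : ℕ → ℝ := fun j => 2 * Real.exp (-2 * φ ((j + n : ℕ) : ℝ)) * p ((j + n : ℕ) : ℝ) *
    Hyp.hh p t ((j + n : ℕ) : ℝ) with hGdef
  set m : ℕ → ℝ := fun j => Real.exp (-2 * φ ((j + n : ℕ) : ℝ)) *
    Hyp.hh p t ((j + n : ℕ) : ℝ) with hmdef
  set I : ℕ → ℝ := fun j => Real.exp (-φ ((j + n : ℕ) : ℝ)) * ∫ u in Set.Ioi (0 : ℝ),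
        Real.exp (-φ (((j + n : ℕ) : ℝ) + u)) * Real.cos (u * t) with hIdef
  have hG0 : ∀ j, 0 ≤ G j := fun j => by
    have := H.pos _ (hx j)
    have := H.hh_pos t (hx j)
    simp only [hGdef]; positivity
  have hm0 : ∀ j, 0 < m j := fun j => by
    have := H.hh_pos t (hx j)
    simp only [hmdef]; positivity
  obtain ⟨sG, l1, l2⟩ := seq_bound G m (s * a) (by linarith) hG0 (fun j => (hm0 j).le)
    (fun j => by simp only [hGdef, hmdef, hcast]; exact (H.step t (hx j)).1)
    (fun j => by simp only [hGdef, hmdef, hcast]; exact (H.step t (hx j)).2)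
    ((H.limM t).comp htop)
  have hI : ∀ j, |2 * I j - G j| ≤ 14 / 13 * (s * a) * G j := by
    intro j
    have hj := hx j
    have h1 := H.pos _ hj
    have h2 := H.hh_pos t hj
    have h3 := H.integral_bound t hj
    have h4 := H.ha _ hj
    have h5 : Real.exp (-2 * φ ((j + n : ℕ) : ℝ)) =
      Real.exp (-φ ((j + n : ℕ) : ℝ)) * Real.exp (-φ ((j + n : ℕ) : ℝ)) := by
      rw [← Real.exp_add]; congr 1; ring
    simp only [hGdef, hIdef]
    rw [h5]
    generalize ((j + n : ℕ) : ℝ) = x at *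
    have e : ∀ A : ℝ, 2 * (Real.exp (-φ x) * A) -
        2 * (Real.exp (-φ x) * Real.exp (-φ x)) * p x * Hyp.hh p t x =
        2 * Real.exp (-φ x) * (A - Real.exp (-φ x) * p x * Hyp.hh p t x) := fun A => by ring
    rw [e, abs_mul, abs_of_pos (by positivity)]
    calc _ ≤ 2 * Real.exp (-φ x) * (14 / 13 * s * (Real.exp (-φ x) * Hyp.hh p t x / x)) := by
          gcongr
      _ = 2 * Real.exp (-φ x) * (14 / 13 * s * (Real.exp (-φ x) * Hyp.hh p t x * (1 / x))) := by
          ring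
      _ ≤ 2 * Real.exp (-φ x) * (14 / 13 * s * (Real.exp (-φ x) * Hyp.hh p t x * (a * p x))) := by
          gcongr
      _ = _ := by ring
  have sD : Summable fun j => 2 * I j - G j :=
    Summable.of_norm_bounded (sG.mul_left (14 / 13 * (s * a))) hI
  have sI : Summable fun j => 2 * I j := by
    refine (sD.add sG).congr fun j => ?_
    ring
  have hT : |2 * ∑' j, I j - ∑' j, G j| ≤ 14 / 13 * (s * a) * ∑' j, G j := by
    rw [← tsum_mul_left, ← sI.tsum_sub sG, ← tsum_mul_left]
    rw [← Real.norm_eq_abs]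
    exact tsum_of_norm_bounded (f := fun j => 2 * I j - G j) (sG.mul_left (14 / 13 * (s * a))).hasSum hI
  have hz : ((0 + n : ℕ) : ℝ) = n := by simp
  have hm00 : m 0 = Real.exp (-2 * φ n) * Hyp.hh p t n := by simp only [hmdef, hz]
  have hG00 : G 0 = 2 * p n * m 0 := by simp only [hGdef, hmdef, hz]; ring
  rw [← hm00]
  rw [hG00] at l2
  exact final_arith _ _ _ _ _ (hm0 0) (by positivity) hpn hab l1 l2 hT

lemma lim_aux (α r c : ℝ) (hα : 0 < α) (hr0 : 0 < r) :
    Tendsto (fun x : ℝ => x ^ c * Real.exp (-(α * x ^ r))) atTop (nhds 0) := by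
  have h := (tendsto_rpow_mul_exp_neg_mul_atTop_nhds_zero (c / r) α hα).comp
    (tendsto_rpow_atTop hr0)
  refine h.congr' ?_
  filter_upwards [eventually_gt_atTop 0] with x hx
  simp only [Function.comp_apply]
  rw [← Real.rpow_mul hx.le, mul_div_cancel₀ _ hr0.ne', neg_mul]

lemma hyp_inst (α r : ℝ) (n : ℕ) (hα : 0 < α) (hr0 : 0 < r) (hr1 : r < 1) (hn : 0 < n)
    (ha : 1 / (α * r) * (n : ℝ) ^ (-r) ≤ 1 / 14) :
    Hyp (fun x => α * x ^ r) (fun x => α * r * x ^ (r - 1)) n (1 - r)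
      (1 / (α * r) * (n : ℝ) ^ (-r)) := by
  have hn0 : (0 : ℝ) < n := by exact_mod_cast hn
  refine ⟨hn0, by linarith, by linarith, by positivity, ha, ?_, ?_, ?_, ?_, ?_, ?_, ?_, ?_⟩
  · intro x hx
    have : 0 < x := hn0.trans_le hx
    positivity
  · intro x hx
    have : 0 < x := hn0.trans_le hx
    refine ((Real.hasDerivAt_rpow_const (p := r) (Or.inl this.ne')).const_mul α).congr_deriv ?_
    ring
  · intro x hx
    have : 0 < x := hn0.trans_le hx
    refine ((Real.hasDerivAt_rpow_const (p := r - 1) (Or.inl this.ne')).const_mul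
      (α * r)).congr_deriv ?_
    rw [Real.rpow_sub_one this.ne' (r - 1)]
    ring
  · intro x hx
    have : 0 < x := hn0.trans_le hx
    positivity
  · intro x hx
    have h0 : 0 < x := hn0.trans_le hx
    have e : 1 / x = x ^ (-r) * x ^ (r - 1) := by
      rw [← Real.rpow_add h0, show -r + (r - 1) = -1 by ring, Real.rpow_neg_one, one_div]
    have e2 : x ^ (-r) ≤ (n : ℝ) ^ (-r) :=
      Real.rpow_le_rpow_of_nonpos hn0 hx (by linarith)
    calc 1 / x = x ^ (-r) * x ^ (r - 1) := e
      _ ≤ (n : ℝ) ^ (-r) * x ^ (r - 1) := by gcongr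
      _ = _ := by field_simp
  · have h := (lim_aux α r (1 - r) hα hr0).const_mul (α * r)⁻¹
    rw [mul_zero] at h
    refine h.congr' ?_
    filter_upwards [eventually_gt_atTop 0] with x hx
    rw [show 1 - r = -(r - 1) by ring, Real.rpow_neg hx.le]
    field_simp
  · have h := (lim_aux α r (2 * (1 - r)) hα hr0).const_mul ((α * r) ^ 2)⁻¹
    rw [mul_zero] at h
    refine h.congr' ?_
    filter_upwards [eventually_gt_atTop 0] with x hx
    rw [show 2 * (1 - r) = -((r - 1) * (2 : ℕ)) by push_cast; ring, Real.rpow_neg hx.le,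
      Real.rpow_mul hx.le, Real.rpow_natCast]
    field_simp
  · intro x hx
    have h0 : 0 < x := hn0.trans_le hx
    have h := integrableOn_rpow_mul_exp_neg_mul_rpow (p := r) (s := 0) (b := α) (by norm_num) hr0 hα
    refine h.mono' ?_ ?_
    · apply ContinuousOn.aestronglyMeasurable _ measurableSet_Ioi
      intro u hu
      have hu : 0 < u := hu
      have c : ContinuousAt (fun u : ℝ => (x + u) ^ r) u :=
        ContinuousAt.rpow_const (by fun_prop) (Or.inr hr0.le)
      exact (continuousAt_const.mul c).neg.rexp.continuousWithinAt
    · refine ae_restrict_of_forall_mem measurableSet_Ioi fun u hu => ?_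
      have hu : 0 < u := hu
      rw [Real.norm_eq_abs, abs_of_pos (Real.exp_pos _), Real.rpow_zero, one_mul, neg_mul]
      gcongr
      linarith

lemma n₂_spec (α r : ℝ) (p : ℝ≥0∞) (hα : 0 < α) (hr0 : 0 < r) (hr1 : r < 1) (hp : 1 ≤ p)
    (n : ℕ) (hn : n₂ α r p ≤ n) : 0 < n ∧
    1 / (α * r) * (n : ℝ) ^ (-r) + α * r * (n : ℝ) ^ (-(1 - r)) ≤ 1 / 14 := by
  have hne : {n : ℕ | 0 < n ∧
    1 / (α * r) * (n : ℝ) ^ (-r) +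
      α * r * (if p = ∞ then 1 else p.toReal) * (n : ℝ) ^ (-(1 - r)) ≤ 1 / 14}.Nonempty := by
    have t1 : Tendsto (fun n : ℕ => 1 / (α * r) * (n : ℝ) ^ (-r) +
      α * r * (if p = ∞ then 1 else p.toReal) * (n : ℝ) ^ (-(1 - r))) atTop
      (nhds (1 / (α * r) * 0 + α * r * (if p = ∞ then 1 else p.toReal) * 0)) := by
      refine Tendsto.add (Tendsto.const_mul _ ?_) (Tendsto.const_mul _ ?_)
      · exact (tendsto_rpow_neg_atTop hr0).comp tendsto_natCast_atTop_atTop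
      · exact (tendsto_rpow_neg_atTop (by linarith)).comp tendsto_natCast_atTop_atTop
    rw [mul_zero, mul_zero, add_zero] at t1
    have e := t1.eventually_le_const (show (0 : ℝ) < 1 / 14 by norm_num)
    obtain ⟨k, h1, h2⟩ := (e.and (eventually_gt_atTop 0)).exists
    exact ⟨k, h2, h1⟩
  obtain ⟨h0, h1⟩ := Nat.sInf_mem hne
  change 0 < n₂ α r p at h0
  change 1 / (α * r) * ((n₂ α r p : ℕ) : ℝ) ^ (-r) +
      α * r * (if p = ∞ then 1 else p.toReal) * ((n₂ α r p : ℕ) : ℝ) ^ (-(1 - r)) ≤ 1 / 14 at h1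
  refine ⟨h0.trans_le hn, le_trans ?_ h1⟩
  have hχ : (1 : ℝ) ≤ if p = ∞ then 1 else p.toReal := by
    split_ifs with h
    · exact le_rfl
    · rw [← ENNReal.toReal_one]
      exact ENNReal.toReal_mono h hp
  have hk0 : (0 : ℝ) < (n₂ α r p : ℕ) := by exact_mod_cast h0
  have hkn : ((n₂ α r p : ℕ) : ℝ) ≤ n := by exact_mod_cast hn
  have r1 : (n : ℝ) ^ (-r) ≤ ((n₂ α r p : ℕ) : ℝ) ^ (-r) :=
    Real.rpow_le_rpow_of_nonpos hk0 hkn (by linarith)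
  have r2 : (n : ℝ) ^ (-(1 - r)) ≤ ((n₂ α r p : ℕ) : ℝ) ^ (-(1 - r)) :=
    Real.rpow_le_rpow_of_nonpos hk0 hkn (by linarith)
  calc _ = 1 / (α * r) * (n : ℝ) ^ (-r) + α * r * 1 * (n : ℝ) ^ (-(1 - r)) := by ring
    _ ≤ _ := by gcongr

theorem statement12 (α r : ℝ) (p : ℝ≥0∞)
    (hα : 0 < α) (hr0 : 0 < r) (hr1 : r < 1) (hp : 1 ≤ p) :
    ∀ t ∈ Set.Icc (-π) π, ∀ n : ℕ, n₂ α r p ≤ n →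
      (∃ Θ : ℝ, |Θ| < 5 ∧
        Qn α r n t =
          Real.exp (-2 * α * (n : ℝ) ^ r) / (t ^ 2 + (α * r * (n : ℝ) ^ (r - 1)) ^ 2) *
            (1 + Θ * ((1 - r) / (α * r) * (n : ℝ) ^ (-r) + α * r * (n : ℝ) ^ (-(1 - r))))) ∧
      0 < Qn α r n t := by

  intro t _ n hn
  obtain ⟨hn0, hab⟩ := n₂_spec α r p hα hr0 hr1 hp n hn
  have hnpos : (0 : ℝ) < n := by exact_mod_cast hn0
  have hb : 0 < α * r * (n : ℝ) ^ (-(1 - r)) := by positivity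
  have ha : 0 < 1 / (α * r) * (n : ℝ) ^ (-r) := by positivity
  have H := hyp_inst α r n hα hr0 hr1 hn0 (by linarith)
  have e1 : r - 1 = -(1 - r) := by ring
  have hab' : (1 - r) * (1 / (α * r) * (n : ℝ) ^ (-r)) + α * r * (n : ℝ) ^ (r - 1) ≤ 1 / 14 := by
    rw [e1]
    have : (1 - r) * (1 / (α * r) * (n : ℝ) ^ (-r)) ≤ 1 * (1 / (α * r) * (n : ℝ) ^ (-r)) := by
      gcongr; linarith
    linarith
  obtain ⟨⟨Θ, h1, h2⟩, h3⟩ := H.main t hab'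
  simp only [← neg_mul] at h2 h3
  refine ⟨⟨Θ, h1, ?_⟩, h3⟩
  refine h2.trans ?_
  simp only [Hyp.hh]
  rw [← div_eq_mul_inv, e1]
  congr 2
  · congr 1; ring
  · ring
end

section
/- Let α>0, 0<r<1, 1≤p≤∞. For t∈[−π,π] and integers n ≥ n₂(α,r,p), the function R_n(t) := 2 Σ_{k=1}^∞ Σ_{j=n}^∞ e^{-α j^r} ∫_0^∞ e^{-α(j+u)^r} ( cos((t−2πk)u) + cos((t+2πk)u) ) du satisfies 0 < R_n(t) ≤ (π/2 − 2/π)(αr n^{-(1-r)} + 1) e^{-2α n^r} < (π/3) e^{-2α n^r}. -/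
open MeasureTheory Real Filter
open scoped ENNReal

lemma phi_hasDeriv (α r x : ℝ) (hx : 0 < x) :
    HasDerivAt (fun x : ℝ => Real.exp (-α * x ^ r))
      (-(α * r * x ^ (r - 1) * Real.exp (-α * x ^ r))) x := by
  have h := ((Real.hasDerivAt_rpow_const (p := r) (Or.inl hx.ne')).const_mul (-α)).exp
  convert h using 1
  ring

lemma phi2_hasDeriv (α r x : ℝ) (hx : 0 < x) :
    HasDerivAt (fun x : ℝ => -(α * r * x ^ (r - 1) * Real.exp (-α * x ^ r)))
      ((α * r * (1 - r) * x ^ (r - 1 - 1) + (α * r * x ^ (r - 1)) ^ 2) * Real.exp (-α * x ^ r)) x := by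
  have h := (((Real.hasDerivAt_rpow_const (p := r - 1) (Or.inl hx.ne')).const_mul (α * r)).mul
    (phi_hasDeriv α r x hx)).neg
  refine HasDerivAt.congr_deriv h ?_
  ring

lemma phi_tendsto (α r : ℝ) (hα : 0 < α) (hr0 : 0 < r) :
    Tendsto (fun x : ℝ => Real.exp (-α * x ^ r)) atTop (nhds 0) := by
  apply Real.tendsto_exp_atBot.comp
  exact (tendsto_rpow_atTop hr0).const_mul_atTop_of_neg (by linarith)

lemma phi2_tendsto (α r : ℝ) (hα : 0 < α) (hr0 : 0 < r) (hr1 : r < 1) :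
    Tendsto (fun x : ℝ => -(α * r * x ^ (r - 1) * Real.exp (-α * x ^ r))) atTop (nhds 0) := by
  have h1 : Tendsto (fun x : ℝ => x ^ (r - 1)) atTop (nhds 0) := by
    have := tendsto_rpow_neg_atTop (y := 1 - r) (by linarith)
    simpa using this
  have := ((h1.const_mul (α * r)).mul (phi_tendsto α r hα hr0)).neg
  simpa using this

lemma phi_integrable (α r : ℝ) (hα : 0 < α) (hr0 : 0 < r) :
    IntegrableOn (fun x : ℝ => Real.exp (-α * x ^ r)) (Set.Ioi 0) := by
  have h := integral_exp_neg_mul_rpow hr0 hα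
  by_contra hc
  rw [integral_undef hc] at h
  have h2 : 0 < α ^ (-1 / r) * Real.Gamma (1 / r + 1) := by
    have := Real.Gamma_pos_of_pos (s := 1 / r + 1) (by positivity)
    positivity
  linarith

lemma phi_shift_integrable (α r a : ℝ) (hα : 0 < α) (hr0 : 0 < r) (ha : 0 < a) :
    IntegrableOn (fun u : ℝ => Real.exp (-α * (a + u) ^ r)) (Set.Ioi 0) := by
  refine Integrable.mono' (phi_integrable α r hα hr0) ?_ ?_
  · exact Measurable.aestronglyMeasurable (by fun_prop)
  · refine (ae_restrict_iff' measurableSet_Ioi).2 (Eventually.of_forall fun u hu => ?_)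
    have hu' : (0 : ℝ) < u := hu
    rw [Real.norm_of_nonneg (Real.exp_pos _).le]
    apply Real.exp_le_exp.2
    have : u ^ r ≤ (a + u) ^ r := Real.rpow_le_rpow hu'.le (by linarith) hr0.le
    nlinarith

lemma phi_cos_integrable (α r a s : ℝ) (hα : 0 < α) (hr0 : 0 < r) (ha : 0 < a) :
    IntegrableOn (fun u : ℝ => Real.exp (-α * (a + u) ^ r) * Real.cos (s * u)) (Set.Ioi 0) := by
  refine Integrable.mono' (phi_shift_integrable α r a hα hr0 ha) ?_ ?_
  · exact Measurable.aestronglyMeasurable (by fun_prop)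
  · refine Eventually.of_forall fun u => ?_
    rw [norm_mul, Real.norm_of_nonneg (Real.exp_pos _).le]
    exact mul_le_of_le_one_right (Real.exp_pos _).le (Real.abs_cos_le_one _)

lemma I_bounds (α r a s : ℝ) (hα : 0 < α) (hr0 : 0 < r) (hr1 : r < 1) (ha : 0 < a) (hs : s ≠ 0) :
    0 < (∫ u in Set.Ioi (0 : ℝ), Real.exp (-α * (a + u) ^ r) * Real.cos (s * u)) ∧
    (∫ u in Set.Ioi (0 : ℝ), Real.exp (-α * (a + u) ^ r) * Real.cos (s * u)) ≤
      2 * (α * r * a ^ (r - 1) * Real.exp (-α * a ^ r)) * (1 / s ^ 2) := by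
  set f : ℝ → ℝ := fun u => Real.exp (-α * (a + u) ^ r) with hf
  set f1 : ℝ → ℝ := fun u => -(α * r * (a + u) ^ (r - 1) * Real.exp (-α * (a + u) ^ r)) with hf1
  set f2 : ℝ → ℝ := fun u => (α * r * (1 - r) * (a + u) ^ (r - 1 - 1) +
    (α * r * (a + u) ^ (r - 1)) ^ 2) * Real.exp (-α * (a + u) ^ r) with hf2
  have hshift : Tendsto (fun u : ℝ => a + u) atTop atTop := tendsto_atTop_add_const_left _ _ tendsto_id
  have d1 : ∀ u ∈ Set.Ici (0 : ℝ), HasDerivAt f (f1 u) u := fun u hu =>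
    (phi_hasDeriv α r (a + u) (by have : (0 : ℝ) ≤ u := hu; linarith)).comp_const_add a u
  have d2 : ∀ u ∈ Set.Ici (0 : ℝ), HasDerivAt f1 (f2 u) u := fun u hu =>
    (phi2_hasDeriv α r (a + u) (by have : (0 : ℝ) ≤ u := hu; linarith)).comp_const_add a u
  have l1 : Tendsto f atTop (nhds 0) := (phi_tendsto α r hα hr0).comp hshift
  have l2 : Tendsto f1 atTop (nhds 0) := (phi2_tendsto α r hα hr0 hr1).comp hshift
  have p2 : ∀ u ∈ Set.Ioi (0 : ℝ), 0 < f2 u := by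
    intro u hu
    have hx : 0 < a + u := by have : (0 : ℝ) < u := hu; linarith
    have h1 : 0 < 1 - r := by linarith
    simp only [hf2]
    positivity
  have i2 : IntegrableOn f2 (Set.Ioi 0) :=
    integrableOn_Ioi_deriv_of_nonneg' d2 (fun u hu => (p2 u hu).le) l2
  have e2 : ∫ u in Set.Ioi (0 : ℝ), f2 u = 0 - f1 0 :=
    integral_Ioi_of_hasDerivAt_of_tendsto' d2 i2 l2
  have ic : IntegrableOn (fun u => f u * Real.cos (s * u)) (Set.Ioi 0) :=
    phi_cos_integrable α r a s hα hr0 ha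
  have i3 : IntegrableOn (fun u => f2 u * (1 - Real.cos (s * u))) (Set.Ioi 0) := by
    refine Integrable.mono' (i2.const_mul 2) ?_ ?_
    · exact Measurable.aestronglyMeasurable (by fun_prop)
    · refine (ae_restrict_iff' measurableSet_Ioi).2 (Eventually.of_forall fun u hu => ?_)
      have h1 := Real.cos_le_one (s * u)
      have h2 := Real.neg_one_le_cos (s * u)
      have h3 := p2 u hu
      rw [Real.norm_of_nonneg (mul_nonneg h3.le (by linarith))]
      nlinarith
  have key : ∫ u in Set.Ioi (0 : ℝ), (f u * Real.cos (s * u) -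
      1 / s ^ 2 * (f2 u * (1 - Real.cos (s * u)))) = 0 - 0 := by
    have hd : ∀ u ∈ Set.Ici (0 : ℝ), HasDerivAt
        (fun u => f u * (Real.sin (s * u) / s) + f1 u * ((Real.cos (s * u) - 1) / s ^ 2))
        (f u * Real.cos (s * u) - 1 / s ^ 2 * (f2 u * (1 - Real.cos (s * u)))) u := by
      intro u hu
      have hsu : HasDerivAt (fun u : ℝ => s * u) s u := by
        simpa using (hasDerivAt_id u).const_mul s
      have h := ((d1 u hu).mul (hsu.sin.div_const s)).add
        ((d2 u hu).mul ((hsu.cos.sub_const 1).div_const (s ^ 2)))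
      refine HasDerivAt.congr_deriv h ?_
      field_simp
      ring
    have hl : Tendsto (fun u => f u * (Real.sin (s * u) / s) + f1 u * ((Real.cos (s * u) - 1) / s ^ 2))
        atTop (nhds 0) := by
      have b1 : Tendsto (fun u => f u * (Real.sin (s * u) / s)) atTop (nhds 0) := by
        refine l1.zero_mul_isBoundedUnder_le ⟨1 / |s|, ?_⟩
        refine eventually_map.2 (Eventually.of_forall fun u => ?_)
        simp only [Function.comp, Real.norm_eq_abs, abs_div]
        gcongr
        exact Real.abs_sin_le_one _
      have b2 : Tendsto (fun u => f1 u * ((Real.cos (s * u) - 1) / s ^ 2)) atTop (nhds 0) := by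
        refine l2.zero_mul_isBoundedUnder_le ⟨2 / |s ^ 2|, ?_⟩
        refine eventually_map.2 (Eventually.of_forall fun u => ?_)
        simp only [Function.comp, Real.norm_eq_abs, abs_div]
        gcongr
        have h1 := Real.cos_le_one (s * u)
        have h2 := Real.neg_one_le_cos (s * u)
        rw [abs_le]; constructor <;> linarith
      simpa using b1.add b2
    have := integral_Ioi_of_hasDerivAt_of_tendsto' hd (ic.sub (i3.const_mul (1 / s ^ 2))) hl
    rw [this]; simp
  rw [integral_sub ic (i3.const_mul (1 / s ^ 2)), integral_const_mul] at key
  have hs2 : 0 < 1 / s ^ 2 := by positivity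
  have eI : (∫ u in Set.Ioi (0 : ℝ), f u * Real.cos (s * u)) =
      1 / s ^ 2 * ∫ u in Set.Ioi (0 : ℝ), f2 u * (1 - Real.cos (s * u)) := by linarith
  rw [eI]
  constructor
  · apply mul_pos hs2
    rw [setIntegral_pos_iff_support_of_nonneg_ae _ i3]
    · have hsub : Set.Ioo 0 (π / |s|) ⊆
          (Function.support fun u => f2 u * (1 - Real.cos (s * u))) ∩ Set.Ioi 0 := by
        rintro u ⟨h0, h1⟩
        refine ⟨?_, h0⟩
        have hsp : 0 < |s| := abs_pos.2 hs
        have h4 : Real.cos (s * u) < 1 := by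
          rw [← Real.cos_abs, abs_mul, abs_of_pos h0, ← Real.cos_zero]
          apply Real.cos_lt_cos_of_nonneg_of_le_pi le_rfl
          · rw [lt_div_iff₀ hsp] at h1; linarith
          · positivity
        have := p2 u h0
        exact (mul_pos this (by linarith)).ne'
      refine lt_of_lt_of_le ?_ (measure_mono hsub)
      rw [Real.volume_Ioo]
      have hsp : 0 < |s| := abs_pos.2 hs
      have : 0 < π / |s| := by positivity
      simpa using this
    · refine (ae_restrict_iff' measurableSet_Ioi).2 (Eventually.of_forall fun u hu => ?_)
      have h1 := Real.cos_le_one (s * u)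
      exact mul_nonneg (p2 u hu).le (by linarith)
  · have : ∫ u in Set.Ioi (0 : ℝ), f2 u * (1 - Real.cos (s * u)) ≤ ∫ u in Set.Ioi (0 : ℝ), 2 * f2 u := by
      refine setIntegral_mono_on i3 (i2.const_mul 2) measurableSet_Ioi fun u hu => ?_
      have h2 := Real.neg_one_le_cos (s * u)
      have h3 := p2 u hu
      nlinarith
    rw [integral_const_mul, e2] at this
    have e0 : 0 - f1 0 = α * r * a ^ (r - 1) * Real.exp (-α * a ^ r) := by simp [hf1]
    rw [e0] at this
    nlinarith

lemma h_step (α r x : ℝ) (hα : 0 < α) (hr0 : 0 < r) (hr1 : r < 1) (hx : 0 < x) :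
    2 * (α * r * (x + 1) ^ (r - 1) * Real.exp (-(2 * α) * (x + 1) ^ r)) ≤
      Real.exp (-(2 * α) * x ^ r) - Real.exp (-(2 * α) * (x + 1) ^ r) := by
  obtain ⟨c, ⟨hc0, hc1⟩, hc⟩ := exists_hasDerivAt_eq_slope
    (fun x : ℝ => Real.exp (-(2 * α) * x ^ r))
    (fun x => -(2 * α * r * x ^ (r - 1) * Real.exp (-(2 * α) * x ^ r)))
    (show x < x + 1 by linarith)
    (fun y hy => (phi_hasDeriv (2 * α) r y (by linarith [hy.1])).continuousAt.continuousWithinAt)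
    (fun y hy => phi_hasDeriv (2 * α) r y (by linarith [hy.1]))
  have hcp : 0 < c := by linarith
  have e1 : (x + 1) ^ (r - 1) ≤ c ^ (r - 1) :=
    Real.rpow_le_rpow_of_nonpos hcp hc1.le (by linarith)
  have e2 : Real.exp (-(2 * α) * (x + 1) ^ r) ≤ Real.exp (-(2 * α) * c ^ r) := by
    apply Real.exp_le_exp.2
    have : c ^ r ≤ (x + 1) ^ r := Real.rpow_le_rpow hcp.le hc1.le hr0.le
    nlinarith
  have e3 : (x + 1) ^ (r - 1) * Real.exp (-(2 * α) * (x + 1) ^ r) ≤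
      c ^ (r - 1) * Real.exp (-(2 * α) * c ^ r) := by gcongr
  have e4 := mul_le_mul_of_nonneg_left e3 (show 0 ≤ 2 * α * r by positivity)
  have : x + 1 - x = 1 := by ring
  rw [this, div_one] at hc
  nlinarith

lemma h_partial (α r : ℝ) (n : ℕ) (hα : 0 < α) (hr0 : 0 < r) (hr1 : r < 1) (hn : 0 < n) (N : ℕ) :
    ∑ j ∈ Finset.range N, (α * r * ((j + n : ℕ) : ℝ) ^ (r - 1) *
        Real.exp (-(2 * α) * ((j + n : ℕ) : ℝ) ^ r)) ≤
      (α * r * (n : ℝ) ^ (r - 1) + 1 / 2) * Real.exp (-(2 * α) * (n : ℝ) ^ r) := by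
  have hn' : (0 : ℝ) < n := by exact_mod_cast hn
  have key : ∀ N : ℕ, ∑ j ∈ Finset.range (N + 1), (α * r * ((j + n : ℕ) : ℝ) ^ (r - 1) *
        Real.exp (-(2 * α) * ((j + n : ℕ) : ℝ) ^ r)) ≤
      (α * r * (n : ℝ) ^ (r - 1) + 1 / 2) * Real.exp (-(2 * α) * (n : ℝ) ^ r) -
       1 / 2 * Real.exp (-(2 * α) * ((N + n : ℕ) : ℝ) ^ r) := by
    intro N
    induction N with
    | zero => simp; linarith
    | succ k ih =>
      rw [Finset.sum_range_succ]
      have h := h_step α r ((k + n : ℕ) : ℝ) hα hr0 hr1 (by positivity)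
      have e : ((k + 1 + n : ℕ) : ℝ) = ((k + n : ℕ) : ℝ) + 1 := by push_cast; ring
      rw [e]
      linarith
  cases N with
  | zero => simp; positivity
  | succ k =>
    refine (key k).trans ?_
    have := Real.exp_pos (-(2 * α) * ((k + n : ℕ) : ℝ) ^ r)
    linarith

noncomputable def wk (t : ℝ) (k : ℕ) : ℝ :=
  1 / (t - 2 * π * ((k : ℝ) + 1)) ^ 2 + 1 / (t + 2 * π * ((k : ℝ) + 1)) ^ 2

lemma wk_le (t : ℝ) (ht : t ∈ Set.Icc (-π) π) (k : ℕ) :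
    wk t k ≤ 5 / 3 / π ^ 2 * (1 / (2 * k + 1) - 1 / (2 * k + 3)) := by
  have hπ := Real.pi_pos
  obtain ⟨h1, h2⟩ := ht
  set m : ℝ := (k : ℝ) + 1 with hm
  have hm1 : 1 ≤ m := by rw [hm]; have : (0 : ℝ) ≤ k := by positivity
                         linarith
  obtain ⟨x, rfl⟩ : ∃ x, t = π * x := ⟨t / π, by field_simp⟩
  have hx1 : -1 ≤ x := by nlinarith
  have hx2 : x ≤ 1 := by nlinarith
  have hx : x ^ 2 ≤ 1 := by nlinarith
  have hD : 0 < 4 * m ^ 2 - x ^ 2 := by nlinarith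
  have hD1 : 0 < 4 * m ^ 2 - 1 := by nlinarith
  have a1 : x - 2 * m ≠ 0 := by intro h; linarith
  have a2 : x + 2 * m ≠ 0 := by intro h; linarith
  have e1 : wk (π * x) k = 1 / π ^ 2 * (2 * (4 * m ^ 2 + x ^ 2) / (4 * m ^ 2 - x ^ 2) ^ 2) := by
    unfold wk
    rw [← hm]
    have b1 : π * x - 2 * π * m = π * (x - 2 * m) := by ring
    have b2 : π * x + 2 * π * m = π * (x + 2 * m) := by ring
    have b3 : 4 * m ^ 2 - x ^ 2 = -((x - 2 * m) * (x + 2 * m)) := by ring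
    rw [b1, b2, b3]
    field_simp
    ring
  have e2 : 5 / 3 / π ^ 2 * (1 / (2 * (k : ℝ) + 1) - 1 / (2 * k + 3)) =
      1 / π ^ 2 * (10 / 3 / (4 * m ^ 2 - 1)) := by
    have c1 : 4 * m ^ 2 - 1 = (2 * k + 1) * (2 * k + 3) := by rw [hm]; ring
    rw [c1]
    field_simp
    ring
  rw [e1, e2]
  apply mul_le_mul_of_nonneg_left _ (by positivity)
  calc 2 * (4 * m ^ 2 + x ^ 2) / (4 * m ^ 2 - x ^ 2) ^ 2
      ≤ 2 * (4 * m ^ 2 + 1) / (4 * m ^ 2 - 1) ^ 2 := by gcongr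
    _ ≤ 10 / 3 / (4 * m ^ 2 - 1) := by
      rw [div_le_div_iff₀ (by positivity) hD1]
      have : 0 ≤ (4 * m ^ 2 - 1) * (m ^ 2 - 1) := mul_nonneg hD1.le (by nlinarith)
      nlinarith

lemma wk_partial (t : ℝ) (ht : t ∈ Set.Icc (-π) π) (K : ℕ) :
    ∑ k ∈ Finset.range K, wk t k ≤ 5 / 3 / π ^ 2 := by
  have key : ∑ k ∈ Finset.range K, wk t k ≤ 5 / 3 / π ^ 2 * (1 - 1 / (2 * K + 1)) := by
    induction K with
    | zero => simp
    | succ k ih =>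
      rw [Finset.sum_range_succ]
      have := wk_le t ht k
      have e : (2 * ((k + 1 : ℕ) : ℝ) + 1) = 2 * k + 3 := by push_cast; ring
      rw [e]
      linarith
  refine key.trans (mul_le_of_le_one_right (by positivity) ?_)
  have : (0 : ℝ) ≤ 1 / (2 * K + 1) := by positivity
  linarith

lemma term_bounds (α r t : ℝ) (hα : 0 < α) (hr0 : 0 < r) (hr1 : r < 1) (ht : t ∈ Set.Icc (-π) π)
    (k : ℕ) (a : ℝ) (ha : 0 < a) :
    0 < Real.exp (-α * a ^ r) * (∫ u in Set.Ioi (0 : ℝ), Real.exp (-α * (a + u) ^ r) *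
      (Real.cos ((t - 2 * π * ((k : ℝ) + 1)) * u) + Real.cos ((t + 2 * π * ((k : ℝ) + 1)) * u))) ∧
    Real.exp (-α * a ^ r) * (∫ u in Set.Ioi (0 : ℝ), Real.exp (-α * (a + u) ^ r) *
      (Real.cos ((t - 2 * π * ((k : ℝ) + 1)) * u) + Real.cos ((t + 2 * π * ((k : ℝ) + 1)) * u))) ≤
      2 * wk t k * (α * r * a ^ (r - 1) * Real.exp (-(2 * α) * a ^ r)) := by
  have hπ := Real.pi_pos
  have hk : (0 : ℝ) ≤ π * k := by positivity
  have s1 : t - 2 * π * ((k : ℝ) + 1) ≠ 0 := by intro h; nlinarith [ht.1, ht.2]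
  have s2 : t + 2 * π * ((k : ℝ) + 1) ≠ 0 := by intro h; nlinarith [ht.1, ht.2]
  obtain ⟨p1, q1⟩ := I_bounds α r a _ hα hr0 hr1 ha s1
  obtain ⟨p2, q2⟩ := I_bounds α r a _ hα hr0 hr1 ha s2
  simp only [mul_add (Real.exp _) (Real.cos _)]
  rw [integral_add (phi_cos_integrable α r a _ hα hr0 ha) (phi_cos_integrable α r a _ hα hr0 ha)]
  have hE := Real.exp_pos (-α * a ^ r)
  refine ⟨mul_pos hE (add_pos p1 p2), ?_⟩
  refine (mul_le_mul_of_nonneg_left (add_le_add q1 q2) hE.le).trans (le_of_eq ?_)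
  have : Real.exp (-(2 * α) * a ^ r) = Real.exp (-α * a ^ r) * Real.exp (-α * a ^ r) := by
    rw [← Real.exp_add]; ring_nf
  rw [this]
  unfold wk
  ring

lemma n2_prop (α r : ℝ) (p : ℝ≥0∞) (hα : 0 < α) (hr0 : 0 < r) (hr1 : r < 1) (hp : 1 ≤ p)
    (n : ℕ) (hn : n₂ α r p ≤ n) : 0 < n ∧ α * r * (n : ℝ) ^ (-(1 - r)) ≤ 1 / 14 := by
  have hne : {n : ℕ | 0 < n ∧
    1 / (α * r) * (n : ℝ) ^ (-r) +
      α * r * (if p = ∞ then 1 else p.toReal) * (n : ℝ) ^ (-(1 - r)) ≤ 1 / 14}.Nonempty := by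
    have h1 := ((tendsto_rpow_neg_atTop hr0).comp tendsto_natCast_atTop_atTop).const_mul (1 / (α * r))
    have h2 := ((tendsto_rpow_neg_atTop (y := 1 - r) (by linarith)).comp
      tendsto_natCast_atTop_atTop).const_mul (α * r * (if p = ∞ then 1 else p.toReal))
    have h3 := h1.add h2
    simp only [mul_zero, add_zero] at h3
    obtain ⟨N, hN1, hN2⟩ := ((h3.eventually (gt_mem_nhds (show (0 : ℝ) < 1 / 14 by norm_num))).and
      (eventually_gt_atTop 0)).exists
    exact ⟨N, hN2, le_of_lt hN1⟩
  obtain ⟨h0, h1⟩ := Nat.sInf_mem hne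
  change 0 < n₂ α r p at h0
  change 1 / (α * r) * ((n₂ α r p : ℕ) : ℝ) ^ (-r) + α * r * (if p = ∞ then 1 else p.toReal) *
    ((n₂ α r p : ℕ) : ℝ) ^ (-(1 - r)) ≤ 1 / 14 at h1
  refine ⟨by omega, ?_⟩
  have hχ : (1 : ℝ) ≤ (if p = ∞ then 1 else p.toReal) := by
    split_ifs with h
    · exact le_rfl
    · have := ENNReal.toReal_mono h hp
      simpa using this
  have hm : (0 : ℝ) < (n₂ α r p : ℕ) := by exact_mod_cast h0
  have hmn : ((n₂ α r p : ℕ) : ℝ) ≤ n := by exact_mod_cast hn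
  have e1 : (n : ℝ) ^ (-(1 - r)) ≤ ((n₂ α r p : ℕ) : ℝ) ^ (-(1 - r)) :=
    Real.rpow_le_rpow_of_nonpos hm hmn (by linarith)
  have e2 : 0 ≤ 1 / (α * r) * ((n₂ α r p : ℕ) : ℝ) ^ (-r) := by positivity
  have e3 : α * r * (n : ℝ) ^ (-(1 - r)) ≤ α * r * ((n₂ α r p : ℕ) : ℝ) ^ (-(1 - r)) := by gcongr
  have e4 : 0 ≤ α * r * ((n₂ α r p : ℕ) : ℝ) ^ (-(1 - r)) := by positivity
  nlinarith

theorem statement13 (α r : ℝ) (p : ℝ≥0∞)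
    (hα : 0 < α) (hr0 : 0 < r) (hr1 : r < 1) (hp : 1 ≤ p) :
    ∀ t ∈ Set.Icc (-π) π, ∀ n : ℕ, n₂ α r p ≤ n →
      0 < Rn α r n t ∧
      Rn α r n t ≤ (π / 2 - 2 / π) * (α * r * (n : ℝ) ^ (-(1 - r)) + 1) *
        Real.exp (-2 * α * (n : ℝ) ^ r) ∧
      (π / 2 - 2 / π) * (α * r * (n : ℝ) ^ (-(1 - r)) + 1) * Real.exp (-2 * α * (n : ℝ) ^ r) <
        π / 3 * Real.exp (-2 * α * (n : ℝ) ^ r) := by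
  intro t ht n hn
  obtain ⟨hn0, hA⟩ := n2_prop α r p hα hr0 hr1 hp n hn
  have hn' : (0 : ℝ) < n := by exact_mod_cast hn0
  have hexp : -(1 - r) = r - 1 := by ring
  have hE' : -2 * α * (n : ℝ) ^ r = -(2 * α) * (n : ℝ) ^ r := by ring
  rw [hexp] at hA ⊢
  rw [hE']
  set A := α * r * (n : ℝ) ^ (r - 1) with hAdef
  set E := Real.exp (-(2 * α) * (n : ℝ) ^ r) with hEdef
  have hA0 : 0 < A := by positivity
  have hE0 : 0 < E := Real.exp_pos _
  have hπ := Real.pi_pos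
  have hπ3 := Real.pi_gt_three
  have hπ4 : π < 3.1416 := Real.pi_lt_d4
  have hπi : 2 / π ≤ 2 / 3 := by gcongr
  have hπi2 : 0.636 < 2 / π := by rw [lt_div_iff₀ hπ]; linarith
  have hpos : ∀ j : ℕ, (0 : ℝ) < ((j + n : ℕ) : ℝ) := fun j => by
    have : 0 < j + n := by omega
    exact_mod_cast this
  -- the majorant in j
  have hhnn : ∀ j : ℕ, 0 ≤ α * r * ((j + n : ℕ) : ℝ) ^ (r - 1) *
        Real.exp (-(2 * α) * ((j + n : ℕ) : ℝ) ^ r) := fun j => by positivity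
  have hsum := summable_of_sum_range_le hhnn (h_partial α r n hα hr0 hr1 hn0)
  have htsum := Real.tsum_le_of_sum_range_le hhnn (h_partial α r n hα hr0 hr1 hn0)
  have hwnn : ∀ k : ℕ, 0 ≤ wk t k := fun k => by unfold wk; positivity
  have hwsum := summable_of_sum_range_le hwnn (wk_partial t ht)
  have hwtsum := Real.tsum_le_of_sum_range_le hwnn (wk_partial t ht)
  have hT := fun k j => term_bounds α r t hα hr0 hr1 ht k ((j + n : ℕ) : ℝ) (hpos j)
  have hRdef : Rn α r n t = 2 * ∑' k : ℕ, ∑' j : ℕ, Real.exp (-α * ((j + n : ℕ) : ℝ) ^ r) *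
    ∫ u in Set.Ioi (0 : ℝ), Real.exp (-α * (((j + n : ℕ) : ℝ) + u) ^ r) *
      (Real.cos ((t - 2 * π * ((k : ℝ) + 1)) * u) + Real.cos ((t + 2 * π * ((k : ℝ) + 1)) * u)) := rfl
  generalize hTd : (fun (k j : ℕ) => Real.exp (-α * ((j + n : ℕ) : ℝ) ^ r) *
    ∫ u in Set.Ioi (0 : ℝ), Real.exp (-α * (((j + n : ℕ) : ℝ) + u) ^ r) *
      (Real.cos ((t - 2 * π * ((k : ℝ) + 1)) * u) + Real.cos ((t + 2 * π * ((k : ℝ) + 1)) * u))) = T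
  have hT1 : ∀ k j, 0 < T k j := fun k j => by rw [← hTd]; exact (hT k j).1
  have hT2 : ∀ k j, T k j ≤ 2 * wk t k * (α * r * ((j + n : ℕ) : ℝ) ^ (r - 1) *
        Real.exp (-(2 * α) * ((j + n : ℕ) : ℝ) ^ r)) := fun k j => by rw [← hTd]; exact (hT k j).2
  have hR : Rn α r n t = 2 * ∑' k : ℕ, ∑' j : ℕ, T k j := by rw [hRdef, ← hTd]
  have hTs : ∀ k, Summable (T k) := fun k =>
    Summable.of_nonneg_of_le (fun j => (hT1 k j).le) (hT2 k) (hsum.mul_left _)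
  have hS1 : ∀ k, 0 < ∑' j, T k j := fun k =>
    (hTs k).tsum_pos (fun j => (hT1 k j).le) 0 (hT1 k 0)
  have hS2 : ∀ k, ∑' j, T k j ≤ wk t k * (2 * ((A + 1 / 2) * E)) := fun k => by
    have h := (hTs k).tsum_le_tsum (hT2 k) (hsum.mul_left _)
    rw [tsum_mul_left] at h
    have h2 := mul_le_mul_of_nonneg_left htsum (show 0 ≤ 2 * wk t k by linarith [hwnn k])
    linarith
  have hSs : Summable (fun k => ∑' j, T k j) :=
    Summable.of_nonneg_of_le (fun k => (hS1 k).le) hS2 (hwsum.mul_right _)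
  have hP := hSs.tsum_pos (fun k => (hS1 k).le) 0 (hS1 0)
  have hU := hSs.tsum_le_tsum hS2 (hwsum.mul_right _)
  rw [tsum_mul_right] at hU
  have hU2 := mul_le_mul_of_nonneg_right hwtsum (show 0 ≤ 2 * ((A + 1 / 2) * E) by positivity)
  have hc : 5 / 3 / π ^ 2 ≤ 5 / 27 := by
    rw [div_le_iff₀ (by positivity)]; nlinarith
  have hU3 := mul_le_mul_of_nonneg_right hc (show 0 ≤ 2 * ((A + 1 / 2) * E) by positivity)
  have hAE : 0 < A * E := by positivity
  refine ⟨by rw [hR]; linarith, ?_, ?_⟩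
  · have h5 : 5 / 6 * ((A + 1) * E) ≤ (π / 2 - 2 / π) * ((A + 1) * E) := by
      apply mul_le_mul_of_nonneg_right _ (by positivity)
      linarith
    rw [hR, mul_assoc]
    linarith
  · apply mul_lt_mul_of_pos_right _ hE0
    have h6 : (π / 2 - 2 / π) * (A + 1) ≤ (π / 2 - 2 / π) * (15 / 14) := by
      apply mul_le_mul_of_nonneg_left _ (by linarith)
      linarith
    linarith
end

section
/- Let ψ be a positive, continuous, convex (downwards), differentiable function on [1,∞) with lim_{t→∞} ψ(t) = 0 and Σ_{j=1}^∞ ψ(j) < ∞. Then for every t∈[−π,π] and every n∈ℕ, one has 0 < Σ_{k=1}^∞ Σ_{j=n}^∞ ψ(j) ∫_0^∞ ψ(j+u) ( cos((t−2πk)u) + cos((t+2πk)u) ) du ≤ (π/4 − 1/π) · ψ(n) · ( |ψ'(n)| + ψ(n) ). -/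
open MeasureTheory Real Filter

structure PreGood (f f' : ℝ → ℝ) : Prop where
  pos : ∀ t, 0 ≤ t → 0 < f t
  conv : ConvexOn ℝ (Set.Ici (0 : ℝ)) f
  der : ∀ t, 0 ≤ t → HasDerivAt f (f' t) t
  lim : Tendsto f atTop (nhds 0)

structure GoodFn (f f' : ℝ → ℝ) : Prop extends PreGood f f' where
  int : IntegrableOn f (Set.Ioi (0 : ℝ))

theorem ioi_shift_int (G : ℝ → ℝ) (h : ℝ) :
    ∫ u in Set.Ioi h, G u = ∫ u in Set.Ioi (0:ℝ), G (h + u) := by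
  have := (measurePreserving_add_left volume h).setIntegral_preimage_emb
    (measurableEmbedding_addLeft h) G (Set.Ioi h)
  rw [← this]
  simp

theorem ioi_shift_integrable (G : ℝ → ℝ) (h : ℝ) :
    IntegrableOn (fun u => G (h + u)) (Set.Ioi (0:ℝ)) ↔ IntegrableOn G (Set.Ioi h) := by
  have := (measurePreserving_add_left volume h).integrableOn_comp_preimage
    (measurableEmbedding_addLeft h) (f := G) (s := Set.Ioi h)
  rw [← this]
  simp [Function.comp_def]

namespace PreGood
variable {f f' : ℝ → ℝ}

theorem tangent (H : PreGood f f') {x y : ℝ} (hx : 0 ≤ x) (hy : 0 ≤ y) :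
    f x + f' x * (y - x) ≤ f y := by
  rcases lt_trichotomy x y with h | h | h
  · have := H.conv.le_slope_of_hasDerivAt hx hy h (H.der x hx)
    rw [slope_def_field, le_div_iff₀ (by linarith)] at this
    linarith
  · subst h; simp
  · have := H.conv.slope_le_of_hasDerivAt hy hx h (H.der x hx)
    rw [slope_def_field, div_le_iff₀ (by linarith)] at this
    linarith

theorem dneg (H : PreGood f f') {x : ℝ} (hx : 0 ≤ x) : f' x < 0 := by
  by_contra hc
  push Not at hc
  have h1 : f x ≤ 0 := by
    refine ge_of_tendsto H.lim ?_
    filter_upwards [eventually_ge_atTop x] with y hy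
    have := H.tangent hx (hx.trans hy)
    nlinarith
  linarith [H.pos x hx]

theorem cont (H : PreGood f f') : ContinuousOn f (Set.Ici 0) :=
  fun x hx => (H.der x hx).continuousAt.continuousWithinAt

theorem anti (H : PreGood f f') : AntitoneOn f (Set.Ici 0) := by
  intro x hx y hy hxy
  have := H.tangent hy hx
  have := H.dneg hy
  nlinarith

end PreGood

namespace GoodFn
variable {f f' : ℝ → ℝ}

theorem shift (H : GoodFn f f') {x : ℝ} (hx : 0 ≤ x) :
    GoodFn (fun u => f (x + u)) (fun u => f' (x + u)) where
  pos t ht := H.pos _ (by linarith)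
  conv := by
    have h1 := H.conv.translate_right x
    refine (h1.subset ?_ (convex_Ici 0))
    intro u hu
    simp only [Set.mem_preimage, Set.mem_Ici] at *
    linarith
  der t ht := by
    have h1 := H.der (x + t) (by linarith)
    exact h1.comp_const_add x t
  lim := H.lim.comp (tendsto_atTop_add_const_left _ x tendsto_id)
  int := (ioi_shift_integrable f x).2 (H.int.mono_set (Set.Ioi_subset_Ioi hx))

theorem intcos (H : GoodFn f f') (a : ℝ) {x : ℝ} (hx : 0 ≤ x) :
    IntegrableOn (fun u => f u * cos (a * u)) (Set.Ioi x) := by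
  have h1 := H.int.mono_set (Set.Ioi_subset_Ioi hx)
  refine Integrable.mono h1 (h1.aestronglyMeasurable.mul (by fun_prop)) ?_
  refine Eventually.of_forall fun u => ?_
  rw [norm_mul]
  exact mul_le_of_le_one_right (norm_nonneg _) (abs_cos_le_one _)

theorem affine_cos (a b s p q : ℝ) (ha : a ≠ 0) :
    ∫ u in p..q, (b + s * u) * cos (a * u) =
     ((b + s * q) * sin (a * q) / a + s * cos (a * q) / a^2) -
     ((b + s * p) * sin (a * p) / a + s * cos (a * p) / a^2) := by
  rw [intervalIntegral.integral_eq_sub_of_hasDerivAt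
    (f := fun u => (b + s * u) * sin (a * u) / a + s * cos (a * u) / a^2)]
  · intro u _
    have e0 : HasDerivAt (fun u : ℝ => a * u) a u := by simpa using (hasDerivAt_id u).const_mul a
    have e1 : HasDerivAt (fun u : ℝ => b + s * u) s u := by
      simpa using ((hasDerivAt_id u).const_mul s).const_add b
    have := ((e1.mul e0.sin).div_const a).add ((e0.cos.const_mul s).div_const (a^2))
    refine this.congr_deriv ?_
    field_simp
    ring
  · exact Continuous.intervalIntegrable (by fun_prop) _ _

theorem period (H : GoodFn f f') {a T : ℝ} (ha : 0 < a) (hT : a * T = 2 * π) :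
    0 ≤ ∫ u in (0:ℝ)..T, f u * cos (a * u) ∧
    ((∫ u in (0:ℝ)..T, f u * cos (a * u)) = 0 → f' 0 = f' T) := by
  have hTpos : 0 < T := by
    by_contra h
    have := pi_pos
    nlinarith
  obtain ⟨p, hp⟩ : ∃ p, p = T / 4 := ⟨_, rfl⟩
  obtain ⟨q, hq⟩ : ∃ q, q = 3 * T / 4 := ⟨_, rfl⟩
  obtain ⟨s, hs⟩ : ∃ s, s = (f q - f p) / (q - p) := ⟨_, rfl⟩
  have hpq : 0 < q - p := by rw [hp, hq]; linarith
  have hs' : s * (q - p) = f q - f p := by rw [hs]; field_simp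
  obtain ⟨b, hb⟩ : ∃ b, b = f p - s * p := ⟨_, rfl⟩
  have hap : a * p = π / 2 := by rw [hp]; linarith
  have haq : a * q = π + π / 2 := by rw [hq]; linarith
  have hp0 : 0 < p := by rw [hp]; linarith
  have hq0 : 0 < q := by linarith
  have fp : f p = b + s * p := by rw [hb]; ring
  have fq : f q = b + s * q := by rw [hb]; linarith
  have c1 : ∀ u, 0 ≤ u → u < p → b + s * u ≤ f u := by
    intro u hu hup
    have := H.conv.secant_mono_aux1 (x := u) (y := p) (z := q) hu hq0.le hup (by linarith)
    rw [fp, fq] at this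
    have h2 : (q - p) * (b + s * u) ≤ (q - p) * f u := by nlinarith
    exact le_of_mul_le_mul_left h2 hpq
  have c2 : ∀ u, p < u → u < q → f u ≤ b + s * u := by
    intro u hu hup
    have := H.conv.secant_mono_aux1 (x := p) (y := u) (z := q) hp0.le hq0.le hu hup
    rw [fp, fq] at this
    have h2 : (q - p) * f u ≤ (q - p) * (b + s * u) := by nlinarith
    exact le_of_mul_le_mul_left h2 hpq
  have c3 : ∀ u, q < u → b + s * u ≤ f u := by
    intro u hu
    have := H.conv.secant_mono_aux1 (x := p) (y := q) (z := u) hp0.le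
      (show (0:ℝ) ≤ u by linarith) (by linarith) hu
    rw [fp, fq] at this
    have h2 : (q - p) * (b + s * u) ≤ (q - p) * f u := by nlinarith
    exact le_of_mul_le_mul_left h2 hpq
  have hnn : ∀ u ∈ Set.Icc 0 T, 0 ≤ (f u - (b + s * u)) * cos (a * u) := by
    rintro u ⟨hu0, huT⟩
    have hau0 : 0 ≤ a * u := by positivity
    rcases lt_trichotomy u p with h | h | h
    · refine mul_nonneg (by linarith [c1 u hu0 h]) (cos_nonneg_of_mem_Icc ⟨?_, ?_⟩)
      · linarith [pi_pos]
      · rw [← hap]; gcongr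
    · rw [h, fp]; simp
    · rcases lt_trichotomy u q with h' | h' | h'
      · refine mul_nonneg_of_nonpos_of_nonpos (by linarith [c2 u h h'])
          (cos_nonpos_of_pi_div_two_le_of_le ?_ ?_)
        · rw [← hap]; gcongr
        · rw [← haq]; gcongr
      · rw [h', fq]; simp
      · refine mul_nonneg (by linarith [c3 u h']) ?_
        rw [← cos_sub_two_pi]
        refine cos_nonneg_of_mem_Icc ⟨?_, ?_⟩
        · have : a * q ≤ a * u := by gcongr
          linarith
        · have : a * u ≤ a * T := by gcongr
          linarith [pi_pos]
  have hct : ContinuousOn f (Set.Icc 0 T) := H.cont.mono Set.Icc_subset_Ici_self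
  have i1 : IntervalIntegrable (fun u => f u * cos (a * u)) volume 0 T := by
    apply ContinuousOn.intervalIntegrable
    rw [Set.uIcc_of_le hTpos.le]
    exact hct.mul (by fun_prop)
  have i2 : IntervalIntegrable (fun u => (b + s * u) * cos (a * u)) volume 0 T :=
    Continuous.intervalIntegrable (by fun_prop) _ _
  have key : ∫ u in (0:ℝ)..T, f u * cos (a * u) =
      ∫ u in (0:ℝ)..T, (f u - (b + s * u)) * cos (a * u) := by
    have e : ∫ u in (0:ℝ)..T, (b + s * u) * cos (a * u) = 0 := by
      rw [affine_cos a b s 0 T ha.ne', hT]; simp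
    simp only [sub_mul]
    rw [intervalIntegral.integral_sub i1 i2, e, sub_zero]
  rw [key]
  refine ⟨intervalIntegral.integral_nonneg hTpos.le hnn, fun h0 => ?_⟩
  have hz : ∀ u ∈ Set.Icc 0 T, (f u - (b + s * u)) * cos (a * u) = 0 := by
    intro u hu
    by_contra hne
    have : 0 < ∫ u in (0:ℝ)..T, (f u - (b + s * u)) * cos (a * u) := by
      apply intervalIntegral.integral_pos hTpos ?_ ?_ ⟨u, hu, ?_⟩
      · exact (hct.sub (by fun_prop)).mul (by fun_prop)
      · intro x hx; exact hnn x ⟨hx.1.le, hx.2⟩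
      · exact lt_of_le_of_ne (hnn u hu) (Ne.symm hne)
    linarith
  have hfL : ∀ u ∈ Set.Icc 0 T, f u = b + s * u := by
    rintro u hu
    rcases mul_eq_zero.1 (hz u hu) with h | h
    · linarith
    · rcases cos_eq_zero_iff.1 h with ⟨k, hk⟩
      have hau0 : 0 ≤ a * u := mul_nonneg ha.le hu.1
      have hauT : a * u ≤ a * T := by have := hu.2; gcongr
      have hpi := pi_pos
      have k0 : (-1 : ℤ) < k := by
        have : (-1 : ℝ) < k := by
          by_contra hh; push Not at hh; nlinarith
        exact_mod_cast this
      have k1 : k < (2 : ℤ) := by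
        have : (k:ℝ) < 2 := by
          by_contra hh; push Not at hh; nlinarith
        exact_mod_cast this
      have : k = 0 ∨ k = 1 := by omega
      rcases this with rfl | rfl
      · have : u = p := by
          apply mul_left_cancel₀ ha.ne'
          rw [hk, hap]; push_cast; ring
        rw [this, fp]
      · have : u = q := by
          apply mul_left_cancel₀ ha.ne'
          rw [hk, haq]; push_cast; ring
        rw [this, fq]
  have hd : ∀ x ∈ Set.Icc 0 T, f' x = s := by
    intro x hx
    have e1 : HasDerivAt (fun u : ℝ => b + s * u) s x := by
      simpa using ((hasDerivAt_id x).const_mul s).const_add b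
    have e2 : HasDerivWithinAt f s (Set.Icc 0 T) x :=
      e1.hasDerivWithinAt.congr hfL (hfL x hx)
    exact (uniqueDiffOn_Icc hTpos x hx).eq_deriv _ (H.der x hx.1).hasDerivWithinAt e2
  rw [hd 0 ⟨le_rfl, hTpos.le⟩, hd T ⟨hTpos.le, le_rfl⟩]

theorem cos_pos_int (H : GoodFn f f') {a : ℝ} (ha : 0 < a) :
    0 < ∫ u in Set.Ioi (0:ℝ), f u * cos (a * u) := by
  obtain ⟨T, hTd⟩ : ∃ T, T = 2 * π / a := ⟨_, rfl⟩
  have hT : a * T = 2 * π := by rw [hTd]; field_simp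
  have hTpos : 0 < T := by rw [hTd]; positivity
  let R : ℕ → ℝ := fun N => ∫ u in Set.Ioi ((N:ℝ) * T), f u * cos (a * u)
  have hper : ∀ N : ℕ, R N - R (N+1) = ∫ u in (0:ℝ)..T, f (N * T + u) * cos (a * u) := by
    intro N
    have hN : 0 ≤ (N:ℝ) * T := by positivity
    have h1 := intervalIntegral.integral_Ioi_sub_Ioi (b := ((N+1 : ℕ):ℝ) * T) (H.intcos a hN)
      (by push_cast; nlinarith)
    show (∫ u in Set.Ioi ((N:ℝ) * T), f u * cos (a * u)) - 
      (∫ u in Set.Ioi (((N + 1 : ℕ):ℝ) * T), f u * cos (a * u)) = _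
    rw [h1]
    have h2 := intervalIntegral.integral_comp_add_left (a := 0) (b := T)
      (fun u => f u * cos (a * u)) (N * T)
    have e : (N:ℝ) * T + T = ((N+1 : ℕ):ℝ) * T := by push_cast; ring
    rw [add_zero, e] at h2
    rw [← h2]
    congr 1
    ext u
    congr 1
    rw [show a * (N * T + u) = a * u + N * (2 * π) by rw [← hT]; ring]
    exact cos_add_nat_mul_two_pi _ _
  have hP : ∀ N : ℕ, 0 ≤ R N - R (N+1) ∧ (R N - R (N+1) = 0 → f' (N * T) = f' (N * T + T)) := by
    intro N
    have hN : 0 ≤ (N:ℝ) * T := by positivity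
    have := (H.shift hN).period ha hT
    rw [hper]
    simpa using this
  have hanti : Antitone R := antitone_nat_of_succ_le fun N => by linarith [(hP N).1]
  have hlim : Tendsto R atTop (nhds 0) :=
    tendsto_integral_Ioi_zero (tendsto_natCast_atTop_atTop.atTop_mul_const hTpos)
  have hnn : ∀ N, 0 ≤ R N := fun N => hanti.le_of_tendsto hlim N
  have hR0 : R 0 = ∫ u in Set.Ioi (0:ℝ), f u * cos (a * u) := by simp [R]
  rw [← hR0]
  refine lt_of_le_of_ne (hnn 0) fun h0 => ?_
  have hz : ∀ N, R N = 0 := fun N => le_antisymm ((hanti (Nat.zero_le N)).trans h0.symm.le) (hnn N)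
  have hd : ∀ N : ℕ, f' (N * T) = f' 0 := by
    intro N
    induction N with
    | zero => simp
    | succ k ih =>
      rw [← ih, (hP k).2 (by rw [hz, hz]; simp)]
      congr 1; push_cast; ring
  have hneg := H.dneg le_rfl
  obtain ⟨N, hN⟩ := exists_nat_gt (f 0 / (-f' 0 * T))
  rw [div_lt_iff₀ (mul_pos (by linarith) hTpos)] at hN
  have hN0 : 0 ≤ (N:ℝ) * T := by positivity
  have := H.tangent hN0 le_rfl
  rw [hd] at this
  have := H.pos _ hN0
  nlinarith

theorem cos_le_int (H : GoodFn f f') {a : ℝ} (ha : 0 < a) :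
    ∫ u in Set.Ioi (0:ℝ), f u * cos (a * u) ≤ 2 * (-f' 0) / a ^ 2 := by
  obtain ⟨h, hd⟩ : ∃ h, h = π / a := ⟨_, rfl⟩
  have hh : a * h = π := by rw [hd]; field_simp
  have hpos : 0 < h := by rw [hd]; positivity
  have h1 := intervalIntegral.integral_Ioi_sub_Ioi (b := h) (H.intcos a le_rfl) hpos.le
  have h2 : ∫ u in Set.Ioi h, f u * cos (a * u) ≤ 0 := by
    rw [ioi_shift_int]
    have := (H.shift hpos.le).cos_pos_int ha
    have e : ∀ u, f (h + u) * cos (a * (h + u)) = - (f (h + u) * cos (a * u)) := by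
      intro u
      rw [mul_add, hh, add_comm π, cos_add_pi]; ring
    simp only [e, integral_neg]
    linarith
  have h3 : ∫ u in (0:ℝ)..h, f u * cos (a * u) ≤ ∫ u in (0:ℝ)..h,
      ((f (h/2) - f' 0 * (h / 2)) + f' 0 * u) * cos (a * u) := by
    apply intervalIntegral.integral_mono_on hpos.le
    · apply ContinuousOn.intervalIntegrable
      rw [Set.uIcc_of_le hpos.le]
      exact (H.cont.mono Set.Icc_subset_Ici_self).mul (by fun_prop)
    · exact Continuous.intervalIntegrable (by fun_prop) _ _
    · rintro u ⟨hu0, huh⟩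
      -- f x - f y ≤ -f' 0 (y - x)
      have hlip : ∀ x y, 0 ≤ x → x ≤ y → f x + f' 0 * (y - x) ≤ f y := by
        intro x y hx hxy
        have a1 := H.tangent hx (hx.trans hxy)
        have a2 := H.tangent hx le_rfl
        have a3 := H.tangent le_rfl hx
        rcases hx.eq_or_lt with h0 | h0
        · subst h0; exact a1
        · have : f' 0 ≤ f' x := by nlinarith
          nlinarith
      have hau0 : 0 ≤ a * u := by positivity
      rcases le_total u (h/2) with hu | hu
      · have hc : 0 ≤ cos (a * u) := by
          refine cos_nonneg_of_mem_Icc ⟨by linarith [pi_pos], ?_⟩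
          rw [show π / 2 = a * (h/2) by rw [← hh]; ring]; gcongr
        have := hlip u (h/2) hu0 hu
        exact mul_le_mul_of_nonneg_right (by linarith) hc
      · have hc : cos (a * u) ≤ 0 := by
          refine cos_nonpos_of_pi_div_two_le_of_le ?_ ?_
          · rw [show π / 2 = a * (h/2) by rw [← hh]; ring]; gcongr
          · have : a * u ≤ a * h := by gcongr
            linarith [pi_pos]
        have := hlip (h/2) u (by positivity) hu
        exact mul_le_mul_of_nonpos_right (by linarith) hc
  rw [affine_cos _ _ _ _ _ ha.ne', hh] at h3
  simp at h3
  have e : 2 * (-f' 0) / a ^ 2 = -f' 0 / a^2 - f' 0 / a^2 := by ring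
  rw [e]
  linarith

end GoodFn

theorem odd_sq_sum : HasSum (fun k : ℕ => 1 / (2 * (k:ℝ) + 1) ^ 2) (π ^ 2 / 8) := by
  have h := hasSum_zeta_two
  have he : HasSum (fun k : ℕ => (1:ℝ) / ((2 * k : ℕ) : ℝ) ^ 2) (1 / 4 * (π ^ 2 / 6)) := by
    have e : (fun k : ℕ => (1:ℝ) / ((2 * k : ℕ) : ℝ) ^ 2) =
        fun k : ℕ => (1:ℝ) / 4 * (1 / (k:ℝ) ^ 2) := by
      ext k
      rw [Nat.cast_mul, mul_pow, one_div_mul_one_div]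
      norm_num
    rw [e]
    exact h.mul_left (1/4)
  have ho : Summable (fun k : ℕ => (1:ℝ) / ((2 * k + 1 : ℕ) : ℝ) ^ 2) :=
    h.summable.comp_injective (i := fun k : ℕ => 2 * k + 1) (by intro x y hxy; simpa using hxy)
  have hs := (HasSum.even_add_odd (f := fun k : ℕ => (1:ℝ) / (k:ℝ) ^ 2) he ho.hasSum).unique h
  have e : (∑' k : ℕ, (1:ℝ) / ((2 * k + 1 : ℕ) : ℝ) ^ 2) = π ^ 2 / 8 := by linarith
  have := ho.hasSum
  rw [e] at this
  simpa using this

theorem ck_sum : HasSum (fun k : ℕ => 1 / (2 * (k:ℝ) + 1) ^ 2 + 1 / (2 * (k:ℝ) + 3) ^ 2)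
    (π ^ 2 / 4 - 1) := by
  have h1 := odd_sq_sum
  have h2 : HasSum (fun k : ℕ => 1 / (2 * (k:ℝ) + 3) ^ 2) (π ^ 2 / 8 - 1) := by
    have := (hasSum_nat_add_iff' (f := fun k : ℕ => 1 / (2 * (k:ℝ) + 1) ^ 2) 1).2 h1
    simp only [Finset.sum_range_one] at this
    have e : (fun k : ℕ => 1 / (2 * (k:ℝ) + 3) ^ 2) =
        fun k : ℕ => 1 / (2 * ((k + 1 : ℕ):ℝ) + 1) ^ 2 := by
      ext k
      rw [show 2 * ((k + 1 : ℕ):ℝ) + 1 = 2 * (k:ℝ) + 3 by push_cast; ring]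
    rw [e]
    simpa using this
  convert h1.add h2 using 1
  ring

theorem a_bound {t A : ℝ} (ht : |t| ≤ π) (hA : 2 * π ≤ A) :
    1 / (A - t) ^ 2 + 1 / (A + t) ^ 2 ≤ 1 / (A - π) ^ 2 + 1 / (A + π) ^ 2 := by
  have hpi := pi_pos
  obtain ⟨h1, h2⟩ := abs_le.1 ht
  have e : ∀ x, -π ≤ x → x ≤ π → 1 / (A - x) ^ 2 + 1 / (A + x) ^ 2 = 
      2 * (A ^ 2 + x ^ 2) / (A ^ 2 - x ^ 2) ^ 2 := by
    intro x hx hx'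
    have p1 : A - x ≠ 0 := by linarith
    have p2 : A + x ≠ 0 := by linarith
    rw [show A ^ 2 - x ^ 2 = (A - x) * (A + x) by ring]
    field_simp
    ring
  rw [e t h1 h2, e π (by linarith) le_rfl]
  have h3 : t ^ 2 ≤ π ^ 2 := by nlinarith
  have h4 : 0 < A ^ 2 - π ^ 2 := by nlinarith
  gcongr

theorem statement14 (ψ ψ' : ℝ → ℝ)
    (hpos : ∀ t, 1 ≤ t → 0 < ψ t)
    (hcont : ContinuousOn ψ (Set.Ici (1 : ℝ)))
    (hconv : ConvexOn ℝ (Set.Ici (1 : ℝ)) ψ)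
    (hderiv : ∀ t, 1 ≤ t → HasDerivAt ψ (ψ' t) t)
    (hlim : Tendsto ψ atTop (nhds 0))
    (hsum : Summable fun j : ℕ => ψ ((j : ℝ) + 1)) :
    ∀ t ∈ Set.Icc (-π) π, ∀ n : ℕ, 1 ≤ n →
      0 < (∑' k : ℕ, ∑' j : ℕ, ψ ((j + n : ℕ) : ℝ) *
          ∫ u in Set.Ioi (0 : ℝ), ψ (((j + n : ℕ) : ℝ) + u) *
            (Real.cos ((t - 2 * π * ((k : ℝ) + 1)) * u) +
              Real.cos ((t + 2 * π * ((k : ℝ) + 1)) * u))) ∧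
      (∑' k : ℕ, ∑' j : ℕ, ψ ((j + n : ℕ) : ℝ) *
          ∫ u in Set.Ioi (0 : ℝ), ψ (((j + n : ℕ) : ℝ) + u) *
            (Real.cos ((t - 2 * π * ((k : ℝ) + 1)) * u) +
              Real.cos ((t + 2 * π * ((k : ℝ) + 1)) * u))) ≤
        (π / 4 - 1 / π) * ψ (n : ℝ) * (|ψ' (n : ℝ)| + ψ (n : ℝ)) := by
  intro t ht n hn
  have hpi := pi_pos
  have H0 : PreGood (fun u => ψ (1 + u)) (fun u => ψ' (1 + u)) :=
    { pos := fun t ht => hpos _ (by linarith)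
      conv := by
        refine ((hconv.translate_right 1).subset ?_ (convex_Ici 0))
        intro u hu
        simp only [Set.mem_preimage, Set.mem_Ici] at *
        linarith
      der := fun t ht => (hderiv (1 + t) (by linarith)).comp_const_add 1 t
      lim := hlim.comp (tendsto_atTop_add_const_left _ 1 tendsto_id) }
  have H1 : GoodFn (fun u => ψ (1 + u)) (fun u => ψ' (1 + u)) :=
    { toPreGood := H0
      int := by
        apply AntitoneOn.integrableOn_Ioi_zero_of_summable H0.anti
        · simpa [add_comm] using hsum
        · intro t ht; exact (H0.pos t (le_of_lt ht)).le }
  have HG : ∀ x : ℝ, 1 ≤ x → GoodFn (fun u => ψ (x + u)) (fun u => ψ' (x + u)) := by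
    intro x hx
    have := H1.shift (x := x - 1) (by linarith)
    have e : ∀ u, 1 + (x - 1 + u) = x + u := fun u => by ring
    simpa only [e] using this
  obtain ⟨g, hg⟩ : ∃ g : ℕ → ℝ, g = fun j => -ψ' ((j + n : ℕ) : ℝ) := ⟨_, rfl⟩
  have hx : ∀ j : ℕ, (1:ℝ) ≤ ((j + n : ℕ) : ℝ) := fun j => by
    have : 1 ≤ j + n := by omega
    exact_mod_cast this
  have gpos : ∀ j, 0 < g j := fun j => by
    have := (HG _ (hx j)).dneg le_rfl
    rw [hg]; simp only [add_zero] at this; simpa using this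
  have gsucc : ∀ j, g (j+1) ≤ ψ ((j + n : ℕ) : ℝ) - ψ ((j + 1 + n : ℕ) : ℝ) := fun j => by
    have := (HG _ (hx j)).tangent (x := 1) (y := 0) zero_le_one le_rfl
    rw [hg]
    have e : ((j + n : ℕ) : ℝ) + 1 = ((j + 1 + n : ℕ) : ℝ) := by push_cast; ring
    simp only [e, add_zero] at this ⊢
    linarith
  have gn : g 0 = |ψ' n| := by
    have := gpos 0
    rw [hg] at this ⊢
    simp only [zero_add] at this ⊢
    rw [abs_of_neg (by linarith)]
  have gpart : ∀ m, ∑ j ∈ Finset.range m, g j ≤ |ψ' n| + ψ n := by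
    have : ∀ m, ∑ j ∈ Finset.range (m+1), g j ≤ |ψ' n| + ψ n - ψ ((m + n : ℕ) : ℝ) := by
      intro m
      induction m with
      | zero => simp [gn]
      | succ k ih => 
        rw [Finset.sum_range_succ]
        linarith [gsucc k]
    intro m
    have h1 := this m
    rw [Finset.sum_range_succ] at h1
    linarith [gpos m, hpos _ (hx m)]
  have gsum : Summable g := summable_of_sum_range_le (fun j => (gpos j).le) gpart
  have gts : ∑' j, g j ≤ |ψ' n| + ψ n := Real.tsum_le_of_sum_range_le (fun j => (gpos j).le) gpart
  have psile : ∀ j : ℕ, ψ ((j + n : ℕ) : ℝ) ≤ ψ n := fun j => by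
    have := (HG n (by simpa using hx 0)).anti (a := 0) (b := (j:ℝ)) (by simp) (by simp) (by simp)
    simp only [add_zero] at this
    rw [show ((j + n : ℕ) : ℝ) = (n:ℝ) + j by push_cast; ring]; exact this
  obtain ⟨c, hc⟩ : ∃ c : ℕ → ℝ, c = fun k : ℕ => (1:ℝ) / (2 * (k:ℝ) + 1) ^ 2 + 1 / (2 * (k:ℝ) + 3) ^ 2 :=
    ⟨_, rfl⟩
  have csum : HasSum c (π ^ 2 / 4 - 1) := by rw [hc]; exact ck_sum
  have cpos : ∀ k, 0 < c k := fun k => by rw [hc]; positivity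
  obtain ⟨F, hF⟩ : ∃ F : ℕ → ℕ → ℝ, F = fun (k j : ℕ) => ψ ((j + n : ℕ) : ℝ) *
          ∫ u in Set.Ioi (0 : ℝ), ψ (((j + n : ℕ) : ℝ) + u) *
            (Real.cos ((t - 2 * π * ((k : ℝ) + 1)) * u) +
              Real.cos ((t + 2 * π * ((k : ℝ) + 1)) * u)) := ⟨_, rfl⟩
  have hn0 : 0 < ψ n := by simpa using hpos _ (hx 0)
  have hFb : ∀ k j, 0 < F k j ∧ F k j ≤ (2 / π ^ 2 * c k * ψ n) * g j := by
    intro k j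
    have G := HG _ (hx j)
    have hA : 2 * π ≤ 2 * π * ((k:ℝ) + 1) := by
      have : 0 ≤ π * (k:ℝ) := by positivity
      linarith
    have ha1 : 0 < 2 * π * ((k:ℝ) + 1) - t := by linarith [ht.2]
    have ha2 : 0 < 2 * π * ((k:ℝ) + 1) + t := by linarith [ht.1]
    have e : F k j = ψ ((j + n : ℕ) : ℝ) * (
        (∫ u in Set.Ioi (0 : ℝ), ψ (((j + n : ℕ) : ℝ) + u) * cos ((2 * π * ((k:ℝ) + 1) - t) * u)) +
        ∫ u in Set.Ioi (0 : ℝ), ψ (((j + n : ℕ) : ℝ) + u) *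
          cos ((2 * π * ((k:ℝ) + 1) + t) * u)) := by
      rw [hF]
      simp only
      rw [← integral_add (G.intcos _ le_rfl) (G.intcos _ le_rfl)]
      congr 2
      ext u
      rw [← mul_add]
      congr 2
      · rw [← cos_neg]; congr 1; ring
      · congr 1; ring
    have p1 := G.cos_pos_int ha1
    have p2 := G.cos_pos_int ha2
    have q1 := G.cos_le_int ha1
    have q2 := G.cos_le_int ha2
    have hp := hpos _ (hx j)
    rw [e]
    refine ⟨mul_pos hp (add_pos p1 p2), ?_⟩
    have hgj : -ψ' (((j + n : ℕ) : ℝ) + 0) = g j := by rw [hg]; simp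
    rw [hgj] at q1 q2
    have hb := a_bound (abs_le.2 ht) hA
    have hck : 1 / (2 * π * ((k:ℝ) + 1) - π) ^ 2 + 1 / (2 * π * ((k:ℝ) + 1) + π) ^ 2
        = c k / π ^ 2 := by
      rw [hc, show 2 * π * ((k:ℝ) + 1) - π = π * (2 * k + 1) by ring,
        show 2 * π * ((k:ℝ) + 1) + π = π * (2 * k + 3) by ring]
      field_simp
    rw [hck] at hb
    calc _ ≤ ψ n * (2 * g j * (c k / π ^ 2)) := by
          refine mul_le_mul (psile j) ?_ (add_pos p1 p2).le hn0.le
          refine (add_le_add q1 q2).trans ?_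
          have : 2 * g j * (1 / (2 * π * ((k:ℝ) + 1) - t) ^ 2 + 1 / (2 * π * ((k:ℝ) + 1) + t) ^ 2)
            ≤ 2 * g j * (c k / π ^ 2) := by
            have := gpos j
            gcongr
          refine le_trans (le_of_eq ?_) this
          ring
      _ = _ := by ring
  have hFs : ∀ k, Summable (F k) := fun k =>
    Summable.of_nonneg_of_le (fun j => (hFb k j).1.le) (fun j => (hFb k j).2) (gsum.mul_left _)
  have hSpos : ∀ k, 0 < ∑' j, F k j := fun k =>
    (hFs k).tsum_pos (fun j => (hFb k j).1.le) 0 (hFb k 0).1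
  obtain ⟨B, hB⟩ : ∃ B, B = 2 / π ^ 2 * ψ n * (|ψ' n| + ψ n) := ⟨_, rfl⟩
  have hSle : ∀ k, ∑' j, F k j ≤ c k * B := fun k => by
    have h1 := (hFs k).tsum_le_tsum (fun j => (hFb k j).2) (gsum.mul_left _)
    rw [tsum_mul_left] at h1
    have h2 : 2 / π ^ 2 * c k * ψ n * ∑' j, g j ≤ 2 / π ^ 2 * c k * ψ n * (|ψ' n| + ψ n) := by
      have := cpos k
      gcongr
    rw [hB]
    linarith
  have hS : Summable fun k => ∑' j, F k j :=
    Summable.of_nonneg_of_le (fun k => (hSpos k).le) hSle (csum.summable.mul_right B)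
  have hconcl : 0 < (∑' k, ∑' j, F k j) ∧ (∑' k, ∑' j, F k j) ≤
      (π / 4 - 1 / π) * ψ (n : ℝ) * (|ψ' (n : ℝ)| + ψ (n : ℝ)) := by
    refine ⟨hS.tsum_pos (fun k => (hSpos k).le) 0 (hSpos 0), ?_⟩
    have h1 := hS.tsum_le_tsum hSle (csum.summable.mul_right B)
    rw [(csum.mul_right B).tsum_eq] at h1
    refine h1.trans ?_
    have hX : 0 ≤ ψ n * (|ψ' n| + ψ n) := by positivity
    have hcoef : (π ^ 2 / 4 - 1) * (2 / π ^ 2) ≤ π / 4 - 1 / π := by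
      have e1 : π / 4 - 1 / π = (π ^ 2 / 4 - 1) * (π / π ^ 2) := by field_simp
      rw [e1]
      have h3 := pi_gt_three
      have : 0 ≤ π ^ 2 / 4 - 1 := by nlinarith
      gcongr
      linarith
    calc _ = ((π ^ 2 / 4 - 1) * (2 / π ^ 2)) * (ψ n * (|ψ' n| + ψ n)) := by rw [hB]; ring
      _ ≤ (π / 4 - 1 / π) * (ψ n * (|ψ' n| + ψ n)) := by gcongr
      _ = _ := by ring
  rw [hF] at hconcl
  exact hconcl
end
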